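/- arXiv:2203.06268 — 2 statements merged into one kernel-verified Lean document; each statement's English description precedes it below -/
import Mathlib

section
/- For all sufficiently large n the following holds. Let p' be a prime with W < p' ≤ n^{1/3} and let S ⊆ 𝒫'_W with |S| < k. Then |B_S ∩ {m : p' | m}| ≤ 2|B_S|/p' and |C_S ∩ {m : p' | m}| ≤ 2|C_S|/p'. Moreover, for any prime p' > n^{1/3} one has |B_S ∩ {m : p' | m}| ≤ 2n^{2/3} and |C_S ∩ {m : p' | m}| ≤ 2n^{2/3}. -/
open Real Filter

/-- `W = W(n) = exp(2^{-10} (log n · log log n)^{1/2})`. -/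
noncomputable def Wp (n : ℕ) : ℝ :=
  Real.exp ((2 : ℝ) ^ (-10 : ℤ) * Real.sqrt (Real.log n * Real.log (Real.log n)))

/-- `k = k(n) = 2^{-5} (log n / log log n)^{1/2}`. -/
noncomputable def kp (n : ℕ) : ℝ :=
  (2 : ℝ) ^ (-5 : ℤ) * Real.sqrt (Real.log n / Real.log (Real.log n))

/-- `α = α(n) = exp(−k log k)`. -/
noncomputable def ap (n : ℕ) : ℝ := Real.exp (-(kp n * Real.log (kp n)))

/-- `𝒫_W`: the set of primes `p ≤ W(n)`. -/
noncomputable def primesLe (n : ℕ) : Set ℕ := {p : ℕ | p.Prime ∧ (p : ℝ) ≤ Wp n}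

/-- `𝒫'_W = 𝒫_W \ {2}`: the odd primes `p ≤ W(n)`. -/
noncomputable def primesLe' (n : ℕ) : Set ℕ := primesLe n \ {2}

/-- `[n]_o = {1, 3, …, 2n−1}`: the first `n` odd positive integers. -/
def oddSet (n : ℕ) : Set ℕ := {m : ℕ | Odd m ∧ m < 2 * n}

/-- `B_S`: the set of `m ∈ {1,…,n}` whose set of prime divisors in `𝒫'_W` is exactly `S`. -/
noncomputable def BSet (n : ℕ) (S : Set ℕ) : Set ℕ :=
  {m : ℕ | 1 ≤ m ∧ m ≤ n ∧ ∀ p ∈ primesLe' n, (p ∣ m ↔ p ∈ S)}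

/-- `C_S`: the set of `m ∈ [n]_o` whose set of prime divisors in `𝒫'_W` is exactly `S`. -/
noncomputable def CSet (n : ℕ) (S : Set ℕ) : Set ℕ :=
  {m : ℕ | m ∈ oddSet n ∧ ∀ p ∈ primesLe' n, (p ∣ m ↔ p ∈ S)}

open Finset
open scoped Nat

/-!
By Brun's pure sieve, the number of `m` in a set `J` whose prime divisors among the primes
`P ⊆ [2, W]` are exactly those in `R` is `X / ∏ p ∈ R, p * ∏ p ∈ P \ R, (1 - p⁻¹)` up to a small
relative error, as soon as `J` contains about `X / D` multiples of every product `D` of primes in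
`P`. This applies to `J = [n]` or `J = [n]_o` with `X = n`, and to the multiples of `d` in `J` with
`X = n / d`; the two main terms differ by the factor `d`, and the factor `2` absorbs the errors.
The sieve is truncated at level `r ≈ k`. Its main error is the elementary symmetric function
`e_r(p⁻¹ : p ≤ W) ≤ (∑ p⁻¹) ^ r / r!`, which is much smaller than `W⁻¹ ≤ ∏ (1 - p⁻¹)` because
`∑ p⁻¹ ≪ (log W) ^ (1 / 2)`.
-/

/-! ### Brun's pure sieve -/

lemma esymm_zero_right {R : Type*} [CommSemiring R] (s : Multiset R) : s.esymm 0 = 1 := by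
  simp [Multiset.esymm]

lemma esymm_zero_succ {R : Type*} [CommSemiring R] (r : ℕ) :
    (0 : Multiset R).esymm (r + 1) = 0 := by
  simp [Multiset.esymm, Multiset.powersetCard_zero_right]

lemma esymm_cons_succ {R : Type*} [CommSemiring R] (a : R) (s : Multiset R) (r : ℕ) :
    (a ::ₘ s).esymm (r + 1) = s.esymm (r + 1) + a * s.esymm r := by
  simp [Multiset.esymm, Multiset.powersetCard_cons, Multiset.map_map,
    Multiset.sum_map_mul_left]

lemma factorial_mul_esymm_le_sum_pow {R : Type*} [CommSemiring R] [LinearOrder R]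
    [IsStrictOrderedRing R] [ExistsAddOfLE R] {s : Multiset R} (hs : ∀ x ∈ s, 0 ≤ x) (r : ℕ) :
    r ! * s.esymm r ≤ s.sum ^ r := by
  induction s using Multiset.induction_on generalizing r with
  | empty => cases r <;> simp [esymm_zero_right, esymm_zero_succ]
  | cons a s ih =>
    obtain ⟨ha, hs⟩ := Multiset.forall_mem_cons.1 hs
    have hsum : 0 ≤ s.sum := Multiset.sum_nonneg hs
    cases r with
    | zero => simp [esymm_zero_right]
    | succ r =>
      calc ((r + 1)! : R) * (a ::ₘ s).esymm (r + 1)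
          = (r + 1)! * s.esymm (r + 1) + (r + 1) * a * (r ! * s.esymm r) := by
            rw [esymm_cons_succ, Nat.factorial_succ]; push_cast; ring
        _ ≤ s.sum ^ (r + 1) + (r + 1) * a * s.sum ^ r := by
            gcongr
            exacts [ih hs _, ih hs _]
        _ = s.sum ^ (r + 1) + ((r + 1 : ℕ) : R) * s.sum ^ r * a := by push_cast; ring
        _ ≤ (s.sum + a) ^ (r + 1) := pow_add_mul_le_add_pow hsum (by positivity) (r + 1)
        _ = (a ::ₘ s).sum ^ (r + 1) := by rw [Multiset.sum_cons, add_comm]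

section

variable {α ι : Type*} (E : ι → α → Prop) [∀ i, DecidablePred (E i)] {x : ι → ℝ} {ε : ℝ}
  {A : Finset ι} {I : Finset α} {X : ℝ}

lemma abs_card_filter_forall_not_sub_le_add (hx : ∀ i ∈ A, 0 ≤ x i ∧ x i ≤ 1) (hX : 0 ≤ X)
    (hI : |(#I : ℝ) - X| ≤ ε) :
    |(#{m ∈ I | ∀ i ∈ A, ¬E i m} : ℝ) - X * ∏ i ∈ A, (1 - x i)| ≤ X + ε := by
  have hcard : (#{m ∈ I | ∀ i ∈ A, ¬E i m} : ℝ) ≤ #I := mod_cast card_filter_le _ _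
  have hprod : 0 ≤ ∏ i ∈ A, (1 - x i) := prod_nonneg fun i hi => sub_nonneg.2 (hx i hi).2
  have hprod' : ∏ i ∈ A, (1 - x i) ≤ 1 :=
    prod_le_one (fun i hi => sub_nonneg.2 (hx i hi).2) fun i hi => sub_le_self _ (hx i hi).1
  have hmain : X * ∏ i ∈ A, (1 - x i) ≤ X := mul_le_of_le_one_right hX hprod'
  have hmain' : 0 ≤ X * ∏ i ∈ A, (1 - x i) := mul_nonneg hX hprod
  have hcard' : (0 : ℝ) ≤ #{m ∈ I | ∀ i ∈ A, ¬E i m} := Nat.cast_nonneg _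
  rw [abs_le] at hI ⊢
  constructor <;> linarith

lemma card_filter_forall_mem_cons_not {a : ι} (ha : a ∉ A) :
    (#{m ∈ I | ∀ i ∈ A.cons a ha, ¬E i m} : ℝ) =
      #{m ∈ I | ∀ i ∈ A, ¬E i m} - #{m ∈ {m ∈ I | E a m} | ∀ i ∈ A, ¬E i m} := by
  rw [eq_sub_iff_add_eq', filter_comm]
  norm_cast
  rw [← card_filter_add_card_filter_not (s := {m ∈ I | ∀ i ∈ A, ¬E i m}) (E a)]
  simp [filter_filter, and_comm]

/- Brun's pure sieve. Sifting by one more event `E a` subtracts the same problem for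
`{m ∈ I | E a m}` and `X * x a` at level `r - 1`, so the errors add up along the recurrence
`e_r(a, A) = e_r(A) + x a * e_{r-1}(A)` of the elementary symmetric functions. -/
theorem abs_card_filter_forall_not_sub_le
    (hx : ∀ i ∈ A, 0 ≤ x i ∧ x i ≤ 1) (hX : 0 ≤ X)
    (hI : ∀ B ⊆ A, |(#{m ∈ I | ∀ i ∈ B, E i m} : ℝ) - X * ∏ i ∈ B, x i| ≤ ε) (r : ℕ) :
    |(#{m ∈ I | ∀ i ∈ A, ¬E i m} : ℝ) - X * ∏ i ∈ A, (1 - x i)| ≤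
      X * (A.val.map x).esymm r + ε * (#A + 1) ^ r := by
  induction A using Finset.cons_induction generalizing I X r with
  | empty =>
    have hI : |(#I : ℝ) - X| ≤ ε := by simpa using hI ∅ subset_rfl
    cases r with
    | zero => simpa [esymm_zero_right] using hI.trans (le_add_of_nonneg_left hX)
    | succ r => simpa [esymm_zero_succ] using hI
  | cons a A ha ih =>
    obtain ⟨⟨ha0, -⟩, hx'⟩ := (forall_mem_cons ha _).1 hx
    cases r with
    | zero =>
      simpa [esymm_zero_right] using
        abs_card_filter_forall_not_sub_le_add E hx hX (by simpa using hI ∅ (empty_subset _))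
    | succ r =>
      have hA := ih hx' hX (fun B hB => hI B (hB.trans (subset_cons ha))) (r + 1)
      have haA := ih (I := {m ∈ I | E a m}) hx' (mul_nonneg hX ha0) (fun B hB => by
        have := hI (B.cons a (notMem_mono hB ha)) (cons_subset_cons.2 hB)
        simpa [filter_filter, prod_cons, mul_assoc] using this) r
      have hε : 0 ≤ ε := (abs_nonneg _).trans (hI ∅ (empty_subset _))
      calc _ = |(#{m ∈ I | ∀ i ∈ A, ¬E i m} - X * ∏ i ∈ A, (1 - x i)) -
              (#{m ∈ {m ∈ I | E a m} | ∀ i ∈ A, ¬E i m} - X * x a * ∏ i ∈ A, (1 - x i))| := by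
            rw [card_filter_forall_mem_cons_not, prod_cons]; ring_nf
        _ ≤ (X * (A.val.map x).esymm (r + 1) + ε * (#A + 1) ^ (r + 1)) +
              (X * x a * (A.val.map x).esymm r + ε * (#A + 1) ^ r) :=
            (abs_sub _ _).trans (add_le_add hA haA)
        _ = X * ((A.cons a ha).val.map x).esymm (r + 1) + ε * (#A + 1) ^ r * (#A + 2) := by
            rw [cons_val, Multiset.map_cons, esymm_cons_succ]; ring
        _ ≤ X * ((A.cons a ha).val.map x).esymm (r + 1) + ε * (#A + 2) ^ r * (#A + 2) := by
            gcongr; norm_num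
        _ = _ := by rw [card_cons]; push_cast; ring

end

/-! ### Sums and products over primes -/

lemma card_primes_mul_eq_le_two {A : Finset ℕ} (hA : ∀ p ∈ A, p.Prime) (m : ℕ) :
    #{z ∈ A ×ˢ A | z.1 * z.2 = m} ≤ 2 := by
  obtain h | ⟨⟨p, q⟩, hpq⟩ := ({z ∈ A ×ˢ A | z.1 * z.2 = m}).eq_empty_or_nonempty
  · simp [h]
  refine (card_le_card (t := {(p, q), (q, p)}) fun ⟨p', q'⟩ h => ?_).trans card_le_two
  simp only [mem_filter, mem_product] at hpq h
  obtain ⟨⟨hp, hq⟩, rfl⟩ := hpq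
  obtain ⟨⟨hp', -⟩, hmul⟩ := h
  have hdvd : p' ∣ p * q := ⟨q', hmul.symm⟩
  simp only [mem_insert, mem_singleton, Prod.mk.injEq]
  rcases (hA p' hp').dvd_mul.1 hdvd with h | h
  · obtain rfl := (Nat.prime_dvd_prime_iff_eq (hA p' hp') (hA p hp)).1 h
    exact .inl ⟨rfl, Nat.eq_of_mul_eq_mul_left (hA p' hp').pos hmul⟩
  · obtain rfl := (Nat.prime_dvd_prime_iff_eq (hA p' hp') (hA q hq)).1 h
    exact .inr ⟨rfl, Nat.eq_of_mul_eq_mul_left (hA p' hp').pos (hmul.trans (mul_comm _ _))⟩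

lemma sum_Icc_inv_le_one_add_log (n : ℕ) : ∑ m ∈ Icc 1 n, (m : ℝ)⁻¹ ≤ 1 + log n := by
  simpa [harmonic_eq_sum_Icc] using harmonic_le_one_add_log n

/- Squaring replaces Mertens' theorem: in `(∑ p⁻¹) ^ 2` each `m ≤ w ^ 2` occurs as a product of two
primes at most twice, which bounds the square by a harmonic sum. -/
lemma sq_sum_inv_primes_le {A : Finset ℕ} {w : ℝ} (hw : 1 ≤ w)
    (hA : ∀ p ∈ A, p.Prime ∧ (p : ℝ) ≤ w) :
    (∑ p ∈ A, (p : ℝ)⁻¹) ^ 2 ≤ 2 * (1 + 2 * log w) := by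
  have hmaps : ∀ z ∈ A ×ˢ A, z.1 * z.2 ∈ Icc 1 (⌊w⌋₊ ^ 2) := fun z hz => by
    obtain ⟨⟨hp, hpw⟩, hq, hqw⟩ := (mem_product.1 hz).imp (hA _) (hA _)
    rw [mem_Icc, sq]
    exact ⟨Nat.mul_pos hp.pos hq.pos, Nat.mul_le_mul (Nat.le_floor hpw) (Nat.le_floor hqw)⟩
  have hfloor : (⌊w⌋₊ : ℝ) ≤ w := Nat.floor_le (by linarith)
  have hfloor' : 0 < ⌊w⌋₊ := Nat.floor_pos.2 hw
  calc (∑ p ∈ A, (p : ℝ)⁻¹) ^ 2 = ∑ z ∈ A ×ˢ A, ((z.1 * z.2 : ℕ) : ℝ)⁻¹ := by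
        rw [sq, sum_mul_sum, ← sum_product']
        push_cast
        simp only [mul_inv]
    _ = ∑ m ∈ Icc 1 (⌊w⌋₊ ^ 2), ∑ z ∈ A ×ˢ A with z.1 * z.2 = m, ((z.1 * z.2 : ℕ) : ℝ)⁻¹ :=
        (sum_fiberwise_of_maps_to hmaps _).symm
    _ = ∑ m ∈ Icc 1 (⌊w⌋₊ ^ 2), #{z ∈ A ×ˢ A | z.1 * z.2 = m} * (m : ℝ)⁻¹ := by
        refine sum_congr rfl fun m _ => ?_
        rw [sum_congr rfl fun z hz => by rw [(mem_filter.1 hz).2], sum_const, nsmul_eq_mul]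
    _ ≤ ∑ m ∈ Icc 1 (⌊w⌋₊ ^ 2), 2 * (m : ℝ)⁻¹ := by
        gcongr with m
        exact_mod_cast card_primes_mul_eq_le_two (fun p hp => (hA p hp).1) m
    _ ≤ 2 * (1 + log (⌊w⌋₊ ^ 2 : ℕ)) := by
        rw [← mul_sum]
        gcongr
        exact sum_Icc_inv_le_one_add_log _
    _ ≤ 2 * (1 + 2 * log w) := by
        rw [Nat.cast_pow, log_pow]
        push_cast
        gcongr

lemma prod_Icc_two_one_sub_inv {K : ℕ} (hK : 1 ≤ K) :
    ∏ p ∈ Icc 2 K, (1 - (p : ℝ)⁻¹) = (K : ℝ)⁻¹ := by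
  induction K, hK using Nat.le_induction with
  | base => simp
  | succ K hK ih =>
    rw [prod_Icc_succ_top (by lia), ih]
    have : (K : ℝ) ≠ 0 := Nat.cast_ne_zero.2 (by lia)
    push_cast
    field_simp
    ring

section

variable {A : Finset ℕ} {w : ℝ}

lemma subset_Icc_two_floor (hA : ∀ p ∈ A, 2 ≤ p ∧ (p : ℝ) ≤ w) : A ⊆ Icc 2 ⌊w⌋₊ :=
  fun p hp => mem_Icc.2 ⟨(hA p hp).1, Nat.le_floor (hA p hp).2⟩

lemma inv_le_prod_one_sub_inv (hw : 1 ≤ w) (hA : ∀ p ∈ A, 2 ≤ p ∧ (p : ℝ) ≤ w) :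
    w⁻¹ ≤ ∏ p ∈ A, (1 - (p : ℝ)⁻¹) := by
  have hfloor : 0 < ⌊w⌋₊ := Nat.floor_pos.2 hw
  calc w⁻¹ ≤ (⌊w⌋₊ : ℝ)⁻¹ := by gcongr; exact Nat.floor_le (by linarith)
    _ = ∏ p ∈ Icc 2 ⌊w⌋₊, (1 - (p : ℝ)⁻¹) := (prod_Icc_two_one_sub_inv hfloor).symm
    _ ≤ ∏ p ∈ A, (1 - (p : ℝ)⁻¹) :=
      prod_le_prod_of_subset_of_le_one (subset_Icc_two_floor hA)
        (fun p _ => sub_nonneg.2 (Nat.cast_inv_le_one p))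
        (fun p _ _ => sub_le_self _ (by positivity))

lemma card_add_one_le_of_forall_le (hw : 1 ≤ w) (hA : ∀ p ∈ A, 2 ≤ p ∧ (p : ℝ) ≤ w) :
    (#A + 1 : ℝ) ≤ w := by
  have hcard := card_le_card (subset_Icc_two_floor hA)
  have hfloor : 0 < ⌊w⌋₊ := Nat.floor_pos.2 hw
  rw [Nat.card_Icc] at hcard
  calc (#A + 1 : ℝ) ≤ ⌊w⌋₊ := by norm_cast; lia
    _ ≤ w := Nat.floor_le (by linarith)

lemma prod_le_rpow_of_card_le (hw : 1 ≤ w) (hA : ∀ p ∈ A, (p : ℝ) ≤ w) {k : ℝ} (hk : #A ≤ k) :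
    ∏ p ∈ A, (p : ℝ) ≤ w ^ k :=
  calc ∏ p ∈ A, (p : ℝ) ≤ ∏ _p ∈ A, w := prod_le_prod (fun p _ => Nat.cast_nonneg p) hA
    _ = w ^ (#A : ℝ) := by rw [prod_const, rpow_natCast]
    _ ≤ w ^ k := rpow_le_rpow_of_exponent_le hw hk

end

/-! ### Sieving by divisibility -/

lemma forall_iff_mem_iff_forall_mem_and_sdiff {ι : Type*} [DecidableEq ι] {Q : ι → Prop}
    {P R : Finset ι} (hR : R ⊆ P) :
    (∀ i ∈ P, (Q i ↔ i ∈ R)) ↔ (∀ i ∈ R, Q i) ∧ ∀ i ∈ P \ R, ¬Q i := by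
  constructor
  · exact fun h => ⟨fun i hi => (h i (hR hi)).2 hi, fun i hi =>
      (h i (mem_sdiff.1 hi).1).not.2 (mem_sdiff.1 hi).2⟩
  · rintro ⟨h, h'⟩ i hi
    exact ⟨fun hQ => by_contra fun hiR => h' i (mem_sdiff.2 ⟨hi, hiR⟩) hQ, h i⟩

/-- The input of the sieve, for a set `J` of size about `X` and a set `P` of primes: each product
`D` of distinct primes of `P` divides `X / D` elements of `J`, up to an absolute error of `1`.
Divisibility by `D` is encoded as divisibility by each of its prime factors. -/
def IsSieveRegular (P J : Finset ℕ) (X : ℝ) : Prop :=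
  ∀ B ⊆ P, |(#{m ∈ J | ∀ p ∈ B, p ∣ m} : ℝ) - X / ∏ p ∈ B, (p : ℝ)| ≤ 1

lemma IsSieveRegular.abs_card_filter_dvd_iff_sub_le {P J R : Finset ℕ} {X : ℝ}
    (h : IsSieveRegular P J X) (hX : 0 ≤ X) (hR : R ⊆ P) (r : ℕ) :
    |(#{m ∈ J | ∀ p ∈ P, (p ∣ m ↔ p ∈ R)} : ℝ) -
        X / (∏ p ∈ R, (p : ℝ)) * ∏ p ∈ P \ R, (1 - (p : ℝ)⁻¹)| ≤
      X / (∏ p ∈ R, (p : ℝ)) * ((P \ R).val.map fun p : ℕ => (p : ℝ)⁻¹).esymm r +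
        (#(P \ R) + 1) ^ r := by
  have hpattern (m : ℕ) : (∀ p ∈ P, (p ∣ m ↔ p ∈ R)) ↔
      (∀ p ∈ R, p ∣ m) ∧ ∀ p ∈ P \ R, ¬p ∣ m := forall_iff_mem_iff_forall_mem_and_sdiff hR
  have hunion (B : Finset ℕ) (m : ℕ) : ((∀ p ∈ R, p ∣ m) ∧ ∀ p ∈ B, p ∣ m) ↔
      ∀ p ∈ R ∪ B, p ∣ m := (forall_mem_union).symm
  simp only [hpattern, ← filter_filter]
  have := abs_card_filter_forall_not_sub_le (ε := 1) (A := P \ R) (I := {m ∈ J | ∀ p ∈ R, p ∣ m})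
    (X := X / ∏ p ∈ R, (p : ℝ)) (x := fun p : ℕ => (p : ℝ)⁻¹) (· ∣ ·)
    (fun p _ => ⟨by positivity, Nat.cast_inv_le_one p⟩) (by positivity) (fun B hB => ?_) r
  · simpa only [one_mul] using this
  · have hdisj : Disjoint R B := disjoint_sdiff.mono_right hB
    have hRB := h (R ∪ B) (union_subset hR (hB.trans sdiff_subset))
    simpa only [filter_filter, hunion, prod_inv_distrib, ← div_eq_mul_inv, div_div,
      ← prod_union hdisj] using hRB

lemma mul_prod_primes_dvd_iff {B : Finset ℕ} {d m : ℕ} (hB : ∀ p ∈ B, p.Prime ∧ ¬p ∣ d) :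
    d * ∏ p ∈ B, p ∣ m ↔ d ∣ m ∧ ∀ p ∈ B, p ∣ m := by
  have hcop : Nat.Coprime d (∏ p ∈ B, p) :=
    Nat.Coprime.prod_right fun p hp => ((hB p hp).1.coprime_iff_not_dvd.2 (hB p hp).2).symm
  refine ⟨fun h => ⟨dvd_of_mul_right_dvd h, fun p hp =>
    (dvd_prod_of_mem _ hp).trans (dvd_of_mul_left_dvd h)⟩, fun ⟨hd, h⟩ =>
    hcop.mul_dvd_of_dvd_of_dvd hd (prod_primes_dvd m (fun p hp => (hB p hp).1.prime) h)⟩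

lemma isSieveRegular_filter_dvd {P J : Finset ℕ} {X : ℝ} {d : ℕ} (hd : Odd d)
    (hP : ∀ p ∈ P, p.Prime ∧ Odd p ∧ ¬p ∣ d)
    (hJ : ∀ D : ℕ, Odd D → |(#{m ∈ J | D ∣ m} : ℝ) - X / D| ≤ 1) :
    IsSieveRegular P {m ∈ J | d ∣ m} (X / d) := fun B hB => by
  have := hJ (d * ∏ p ∈ B, p) (hd.mul (prod_induction _ Odd (fun _ _ => Odd.mul) odd_one
    fun p hp => (hP p (hB hp)).2.1))
  simp only [mul_prod_primes_dvd_iff fun p hp => (hP p (hB hp)).imp_right And.right] at this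
  simpa [filter_filter, div_div] using this

lemma isSieveRegular_of_forall_odd {P J : Finset ℕ} {X : ℝ} (hP : ∀ p ∈ P, p.Prime ∧ Odd p)
    (hJ : ∀ D : ℕ, Odd D → |(#{m ∈ J | D ∣ m} : ℝ) - X / D| ≤ 1) : IsSieveRegular P J X := by
  simpa using isSieveRegular_filter_dvd odd_one
    (fun p hp => ⟨(hP p hp).1, (hP p hp).2, (hP p hp).1.not_dvd_one⟩) hJ

lemma abs_card_Ioc_filter_dvd_sub_le (n D : ℕ) :
    |(#{m ∈ Ioc 0 n | D ∣ m} : ℝ) - n / D| ≤ 1 := by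
  rw [Nat.Ioc_filter_dvd_card_eq_div, ← Nat.floor_div_eq_div (K := ℝ), abs_sub_comm]
  exact Nat.abs_sub_floor_le (by positivity)

lemma odd_and_dvd_iff_modEq {D m : ℕ} (hD : Odd D) : Odd m ∧ D ∣ m ↔ m ≡ D [MOD 2 * D] := by
  have hmod_two : Odd m ↔ m ≡ D [MOD 2] := by rw [Nat.odd_iff, Nat.ModEq, Nat.odd_iff.1 hD]
  have hmod_D : D ∣ m ↔ m ≡ D [MOD D] := by rw [Nat.ModEq, Nat.mod_self, Nat.dvd_iff_mod_eq_zero]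
  rw [hmod_two, hmod_D, Nat.modEq_and_modEq_iff_modEq_mul (Nat.coprime_two_left.2 hD)]

lemma card_odd_filter_dvd_eq_ceil {n D : ℕ} (hD : Odd D) :
    (#{m ∈ range (2 * n) | Odd m ∧ D ∣ m} : ℤ) = ⌈(n : ℚ) / D - 1 / 2⌉ := by
  have hpos : 0 < D := hD.pos
  simp only [odd_and_dvd_iff_modEq hD]
  rw [← Nat.count_eq_card_filter_range, Nat.count_modEq_card_eq_ceil _ (by lia),
    Nat.mod_eq_of_lt (by lia)]
  congr 1
  push_cast
  field_simp

lemma abs_card_odd_filter_dvd_sub_le (n : ℕ) {D : ℕ} (hD : Odd D) :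
    |(#{m ∈ {m ∈ range (2 * n) | Odd m} | D ∣ m} : ℝ) - n / D| ≤ 1 := by
  rw [filter_filter]
  have hceil := card_odd_filter_dvd_eq_ceil (n := n) hD
  have hle := Int.le_ceil ((n : ℚ) / D - 1 / 2)
  have hlt := Int.ceil_lt_add_one ((n : ℚ) / D - 1 / 2)
  rw [← hceil] at hle hlt
  have : |(#{m ∈ range (2 * n) | Odd m ∧ D ∣ m} : ℚ) - n / D| ≤ 1 := by
    push_cast at hle hlt
    rw [abs_le]
    constructor <;> linarith
  simpa using (Rat.cast_le (K := ℝ)).2 this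

/-! ### Growth of `W` and `k` -/

lemma kp_sq_mul_log_log {n : ℕ} (hn : 0 < log (log n)) :
    kp n ^ 2 * log (log n) = log n / 1024 := by
  rw [kp, mul_pow, sq_sqrt (div_nonneg (log_natCast_nonneg n) hn.le)]
  field_simp
  ring

lemma log_Wp {n : ℕ} (hn : 0 < log (log n)) : log (Wp n) = kp n * log (log n) / 32 := by
  rw [Wp, log_exp, kp, show log n * log (log n) = log n / log (log n) * log (log n) ^ 2 by
    field_simp, sqrt_mul (div_nonneg (log_natCast_nonneg n) hn.le), sqrt_sq hn.le]
  ring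

lemma one_le_Wp (n : ℕ) : 1 ≤ Wp n := one_le_exp (by positivity)

lemma log_pos_of_log_log_pos {n : ℕ} (hn : 0 < log (log n)) : 0 < log n :=
  (log_natCast_nonneg n).lt_of_ne fun h => by simp [← h] at hn

lemma exp_le_kp {n : ℕ} (hn : 100 ≤ log (log n)) : exp (log (log n) / 4) ≤ kp n := by
  set l := log (log n) with hl
  have hlog : log n = exp (l / 4) ^ 2 * exp (l / 2) := by
    rw [← exp_log (log_pos_of_log_log_pos (by linarith)), ← hl, ← exp_nat_mul, ← exp_add]
    ring_nf
  have hpoly : 1024 * l ≤ exp (l / 2) := by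
    have := pow_div_factorial_le_exp (x := l / 2) (by linarith) 4
    norm_num [Nat.factorial] at this
    nlinarith [pow_le_pow_left₀ (by norm_num) hn 3]
  have hk := kp_sq_mul_log_log (n := n) (by linarith)
  rw [← hl, hlog] at hk
  have hk0 : 0 ≤ kp n := by unfold kp; positivity
  refine (sq_le_sq₀ (exp_pos _).le hk0).1 (le_of_mul_le_mul_right ?_ (show 0 < l by linarith))
  rw [hk, le_div_iff₀ (by norm_num)]
  nlinarith [mul_le_mul_of_nonneg_left hpoly (sq_nonneg (exp (l / 4)))]

lemma mul_exp_le_kp_mul_log_log {n : ℕ} (hn : 100 ≤ log (log n)) :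
    1024 * exp (log (log n) / 8) ≤ kp n * log (log n) := by
  have hk := exp_le_kp hn
  set l := log (log n)
  have hsq : exp (l / 4) = exp (l / 8) * exp (l / 8) := by rw [← exp_add]; ring_nf
  have hexp : l / 8 + 1 ≤ exp (l / 8) := add_one_le_exp _
  calc 1024 * exp (l / 8) ≤ exp (l / 8) * exp (l / 8) * l := by
        have : 1024 ≤ exp (l / 8) * l := by nlinarith
        nlinarith [exp_pos (l / 8)]
    _ ≤ kp n * l := by rw [← hsq]; gcongr

/- With `l = log (log n)` and `k = kp n`, the bound is about `(T / k) ^ k` with `T` of order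
`(k * l) ^ (1 / 2)`, roughly `k ^ (-k / 2)`, against `W⁻¹ = exp (-k * l / 32)`. The auxiliary factor
`exp (l / 16) ^ r`, inserted and removed, turns the comparison into one of exponents. -/
lemma pow_div_factorial_ceil_kp_le {n : ℕ} (hn : 100 ≤ log (log n)) {T : ℝ} (hT : 0 ≤ T)
    (hT2 : T ^ 2 ≤ 2 * (1 + 2 * log (Wp n))) :
    T ^ ⌈kp n⌉₊ / ⌈kp n⌉₊ ! ≤ (8 * Wp n)⁻¹ := by
  have hkl := mul_exp_le_kp_mul_log_log hn
  rw [log_Wp (by linarith)] at hT2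
  have hW : Wp n = exp (kp n * log (log n) / 32) := by
    rw [← log_Wp (by linarith), exp_log (by linarith [one_le_Wp n])]
  have hceil := Nat.le_ceil (kp n)
  set l := log (log n)
  set k := kp n
  set r := ⌈k⌉₊
  have hexp : l / 8 + 1 ≤ exp (l / 8) := add_one_le_exp _
  have hscaled : exp (l / 16) * T ≤ k * l / 64 := by
    refine le_of_sq_le_sq ?_ (by linarith)
    calc (exp (l / 16) * T) ^ 2 = exp (l / 8) * T ^ 2 := by
          rw [mul_pow, ← exp_nat_mul]; ring_nf
      _ ≤ exp (l / 8) * (k * l / 4) := by gcongr; linarith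
      _ ≤ (k * l / 64) ^ 2 := by nlinarith
  calc T ^ r / r ! = exp (-(l / 16 * r)) * ((exp (l / 16) * T) ^ r / r !) := by
        rw [mul_pow, ← exp_nat_mul, exp_neg, mul_comm (r : ℝ)]
        field_simp
    _ ≤ exp (-(l / 16 * k)) * exp (k * l / 64) := by
        gcongr
        exact (pow_div_factorial_le_exp _ (by positivity) r).trans (exp_le_exp.2 hscaled)
    _ = (exp (k * l / 64) * Wp n)⁻¹ := by
        rw [hW, ← exp_add, ← exp_add, ← exp_neg]; ring_nf
    _ ≤ (8 * Wp n)⁻¹ := by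
        have : k * l / 64 + 1 ≤ exp (k * l / 64) := add_one_le_exp _
        have := one_le_Wp n
        gcongr
        linarith

lemma esymm_inv_primes_le {n : ℕ} (hn : 100 ≤ log (log n)) {A : Finset ℕ}
    (hA : ∀ p ∈ A, p.Prime ∧ (p : ℝ) ≤ Wp n) :
    (A.val.map fun p : ℕ => (p : ℝ)⁻¹).esymm ⌈kp n⌉₊ ≤ (8 * Wp n)⁻¹ := by
  have hesymm := factorial_mul_esymm_le_sum_pow (s := A.val.map fun p : ℕ => (p : ℝ)⁻¹)
    (by simp) ⌈kp n⌉₊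
  rw [mul_comm, ← le_div_iff₀ (by positivity)] at hesymm
  exact hesymm.trans (pow_div_factorial_ceil_kp_le hn (sum_nonneg fun p _ => by positivity)
    (sq_sum_inv_primes_le (one_le_Wp n) hA))

lemma six_mul_Wp_rpow_le {n : ℕ} (hn : 100 ≤ log (log n)) :
    6 * (Wp n * Wp n ^ ⌈kp n⌉₊ * Wp n ^ kp n) ≤ (n : ℝ) ^ (2 / 3 : ℝ) := by
  have hl : 0 < log (log n) := by linarith
  have hk1 : 1 ≤ kp n := (one_le_exp (by positivity)).trans (exp_le_kp hn)
  have hlog : 101 ≤ log n := by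
    have := add_one_le_exp (log (log n))
    rw [exp_log (log_pos_of_log_log_pos hl)] at this
    linarith
  have hn0 : (0 : ℝ) < n := Nat.cast_pos.2 (Nat.pos_of_ne_zero fun h => by norm_num [h] at hlog)
  have hWpos : 0 < Wp n := by linarith [one_le_Wp n]
  have hexponent : 1 + ⌈kp n⌉₊ + kp n ≤ 4 * kp n := by
    linarith [Nat.ceil_lt_add_one (zero_le_one.trans hk1)]
  calc 6 * (Wp n * Wp n ^ ⌈kp n⌉₊ * Wp n ^ kp n)
      = 6 * Wp n ^ (1 + ⌈kp n⌉₊ + kp n) := by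
        rw [rpow_add hWpos, rpow_add hWpos, rpow_one, rpow_natCast]
    _ ≤ exp 5 * Wp n ^ (4 * kp n) := by
        gcongr
        exacts [by linarith [add_one_le_exp 5], one_le_Wp n]
    _ = exp (5 + log n / 8192) := by
        rw [rpow_def_of_pos hWpos, log_Wp hl, ← exp_add]
        congr 2
        linear_combination kp_sq_mul_log_log hl / 8
    _ ≤ (n : ℝ) ^ (2 / 3 : ℝ) := by
        rw [rpow_def_of_pos hn0]
        gcongr
        linarith

/-! ### Comparison of `J` with its multiples of `d` -/

lemma le_two_mul_div_of_abs_sub_le {N N' Y V d e D : ℝ} (hd : 1 ≤ d) (hY : 0 ≤ Y)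
    (hD0 : 0 ≤ D) (hN : |N - Y * V| ≤ Y * e + D) (hN' : |N' - Y / d * V| ≤ Y / d * e + D)
    (hV : 8 * e ≤ V) (hD : 6 * (d * D) ≤ Y * V) : N' ≤ 2 * N / d := by
  have hd0 : 0 < d := by linarith
  have hlower := (abs_le.1 hN).1
  have hupper : N' * d ≤ Y * V + Y * e + d * D := by
    have := mul_le_mul_of_nonneg_right (abs_le.1 hN').2 hd0.le
    field_simp at this
    linarith
  have hYe : 8 * (Y * e) ≤ Y * V := by nlinarith
  have hdD : D ≤ d * D := le_mul_of_one_le_left hD0 hd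
  rw [le_div_iff₀ hd0]
  linarith

lemma IsSieveRegular.card_filter_dvd_iff_le {n : ℕ} (hn : 100 ≤ log (log n))
    {P J J' R : Finset ℕ} {d : ℝ} (hP : ∀ p ∈ P, p.Prime ∧ (p : ℝ) ≤ Wp n)
    (hJ : IsSieveRegular P J n) (hJ' : IsSieveRegular P J' (n / d)) (hR : R ⊆ P)
    (hRk : #R ≤ kp n) (hd : 1 ≤ d) (hdn : d ≤ (n : ℝ) ^ (1 / 3 : ℝ)) :
    (#{m ∈ J' | ∀ p ∈ P, (p ∣ m ↔ p ∈ R)} : ℝ) ≤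
      2 * #{m ∈ J | ∀ p ∈ P, (p ∣ m ↔ p ∈ R)} / d := by
  have hW := one_le_Wp n
  have hP' : ∀ p ∈ P \ R, 2 ≤ p ∧ (p : ℝ) ≤ Wp n := fun p hp =>
    (hP p (sdiff_subset hp)).imp_left Nat.Prime.two_le
  have hprod : 0 < ∏ p ∈ R, (p : ℝ) := prod_pos fun p hp => mod_cast (hP p (hR hp)).1.pos
  have hprodle : ∏ p ∈ R, (p : ℝ) ≤ Wp n ^ kp n :=
    prod_le_rpow_of_card_le hW (fun p hp => (hP p (hR hp)).2) hRk
  have hV := inv_le_prod_one_sub_inv hW hP'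
  have hN := hJ.abs_card_filter_dvd_iff_sub_le (by positivity) hR ⌈kp n⌉₊
  have hN' := hJ'.abs_card_filter_dvd_iff_sub_le (by positivity) hR ⌈kp n⌉₊
  rw [div_right_comm] at hN'
  refine le_two_mul_div_of_abs_sub_le hd (by positivity) (by positivity) hN hN' ?_ ?_
  · refine le_trans ?_ hV
    have := esymm_inv_primes_le hn fun p hp => hP p (sdiff_subset (s := P) (t := R) hp)
    rw [mul_inv] at this
    linarith
  · refine le_trans ?_ (mul_le_mul_of_nonneg_left hV (by positivity))
    rw [← div_eq_mul_inv, div_div, le_div_iff₀ (by positivity)]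
    calc 6 * (d * (#(P \ R) + 1) ^ ⌈kp n⌉₊) * ((∏ p ∈ R, (p : ℝ)) * Wp n)
        ≤ 6 * (d * Wp n ^ ⌈kp n⌉₊) * (Wp n ^ kp n * Wp n) := by
          gcongr
          exact card_add_one_le_of_forall_le hW hP'
      _ = 6 * (Wp n * Wp n ^ ⌈kp n⌉₊ * Wp n ^ kp n) * d := by ring
      _ ≤ (n : ℝ) ^ (2 / 3 : ℝ) * (n : ℝ) ^ (1 / 3 : ℝ) := by
          gcongr
          exact six_mul_Wp_rpow_le hn
      _ = n := by
          rw [← rpow_add_of_nonneg (by positivity) (by norm_num) (by norm_num)]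
          norm_num

lemma finite_primesLe' (n : ℕ) : (primesLe' n).Finite :=
  (Set.finite_Iic ⌊Wp n⌋₊).subset fun _ hp => Nat.le_floor hp.1.2

lemma two_mem_primesLe {n : ℕ} (hn : 100 ≤ log (log n)) : 2 ∈ primesLe n := by
  refine ⟨Nat.prime_two, ?_⟩
  have hlog : log (Wp n) ≤ Wp n - 1 := log_le_sub_one_of_pos (by linarith [one_le_Wp n])
  have hexp : 1 ≤ exp (log (log n) / 8) := one_le_exp (by linarith)
  have := mul_exp_le_kp_mul_log_log hn
  rw [log_Wp (by linarith)] at hlog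
  push_cast
  linarith

lemma BSet_eq (n : ℕ) (S : Set ℕ) :
    BSet n S = {m | m ∈ Ioc 0 n ∧ ∀ p ∈ primesLe' n, (p ∣ m ↔ p ∈ S)} := by
  ext m
  simp [BSet, Nat.succ_le_iff, and_assoc]

lemma CSet_eq (n : ℕ) (S : Set ℕ) :
    CSet n S = {m | m ∈ ({m ∈ range (2 * n) | Odd m} : Finset ℕ) ∧
      ∀ p ∈ primesLe' n, (p ∣ m ↔ p ∈ S)} := by
  ext m
  simp [CSet, oddSet, and_comm]

lemma ncard_pattern_inter_dvd_le {n : ℕ} (hn : 100 ≤ log (log n)) {S : Set ℕ}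
    (hS : ((S ∩ primesLe' n).ncard : ℝ) ≤ kp n) {J : Finset ℕ}
    (hJ : ∀ D : ℕ, Odd D → |(#{m ∈ J | D ∣ m} : ℝ) - n / D| ≤ 1) {d : ℕ}
    (hd : ∀ p ∈ primesLe n, ¬p ∣ d) (hdn : (d : ℝ) ≤ (n : ℝ) ^ (1 / 3 : ℝ)) :
    (({m | m ∈ J ∧ ∀ p ∈ primesLe' n, (p ∣ m ↔ p ∈ S)} ∩ {m | d ∣ m}).ncard : ℝ) ≤
      2 * ({m | m ∈ J ∧ ∀ p ∈ primesLe' n, (p ∣ m ↔ p ∈ S)}.ncard : ℝ) / d := by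
  obtain ⟨P, hP⟩ := (finite_primesLe' n).exists_finset_coe
  obtain ⟨R, hR⟩ := ((finite_primesLe' n).inter_of_right S).exists_finset_coe
  have hmemP {p : ℕ} : p ∈ P ↔ p ∈ primesLe' n := by rw [← hP, mem_coe]
  have hmemR {p : ℕ} : p ∈ R ↔ p ∈ S ∧ p ∈ primesLe' n := by rw [← mem_coe, hR, Set.mem_inter_iff]
  have hdodd : Odd d := Nat.not_even_iff_odd.1 fun h => hd 2 (two_mem_primesLe hn) h.two_dvd
  have hPodd : ∀ p ∈ P, p.Prime ∧ Odd p := fun p hp =>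
    have h := hmemP.1 hp
    ⟨h.1.1, h.1.1.odd_of_ne_two h.2⟩
  have hpattern (m : ℕ) : (∀ p ∈ primesLe' n, (p ∣ m ↔ p ∈ S)) ↔ ∀ p ∈ P, (p ∣ m ↔ p ∈ R) :=
    forall_congr' fun p => by rw [hmemP, hmemR]; exact forall_congr' fun hp => by simp [hp]
  have hregular := isSieveRegular_filter_dvd hdodd
    (fun p hp => ⟨(hPodd p hp).1, (hPodd p hp).2, hd p (hmemP.1 hp).1⟩) hJ
  have hmain := (isSieveRegular_of_forall_odd hPodd hJ).card_filter_dvd_iff_le hn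
    (fun p hp => (hmemP.1 hp).1) hregular (fun p hp => hmemP.2 (hmemR.1 hp).2)
    (by rwa [← hR, Set.ncard_coe_finset] at hS) (mod_cast hdodd.pos) hdn
  rw [← Set.ncard_coe_finset, ← Set.ncard_coe_finset] at hmain
  simpa only [hpattern, coe_filter, mem_filter, Set.inter_def, Set.mem_ofPred_eq,
    and_right_comm] using hmain

lemma card_odd_filter_dvd_le (n d : ℕ) :
    (#{m ∈ {m ∈ range (2 * n) | Odd m} | d ∣ m} : ℝ) ≤ n / d + 1 := by
  rcases Nat.even_or_odd d with hd | hd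
  · have : #{m ∈ {m ∈ range (2 * n) | Odd m} | d ∣ m} = 0 := by
      simp only [card_eq_zero, filter_eq_empty_iff, mem_filter]
      exact fun m hm hdm => Nat.not_even_iff_odd.2 hm.2 (hd.trans_dvd hdm)
    rw [this, Nat.cast_zero]
    positivity
  · linarith [(abs_le.1 (abs_card_odd_filter_dvd_sub_le n hd)).2]

lemma ncard_inter_dvd_le_of_lt {n d : ℕ} (hn : 1 ≤ n) (hd : (n : ℝ) ^ (1 / 3 : ℝ) < d)
    {J : Finset ℕ} (hJ : (#{m ∈ J | d ∣ m} : ℝ) ≤ n / d + 1) {T : Set ℕ} (hT : T ⊆ J) :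
    ((T ∩ {m | d ∣ m}).ncard : ℝ) ≤ 2 * (n : ℝ) ^ (2 / 3 : ℝ) := by
  have hn1 : (1 : ℝ) ≤ n := mod_cast hn
  have hsub : T ∩ {m | d ∣ m} ⊆ ({m ∈ J | d ∣ m} : Finset ℕ) := fun m hm =>
    mem_coe.2 (mem_filter.2 ⟨hT hm.1, hm.2⟩)
  calc ((T ∩ {m | d ∣ m}).ncard : ℝ) ≤ #{m ∈ J | d ∣ m} := by
        rw [← Set.ncard_coe_finset]
        exact mod_cast Set.ncard_le_ncard hsub (finite_toSet _)
    _ ≤ n / (n : ℝ) ^ (1 / 3 : ℝ) + 1 := hJ.trans (by gcongr)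
    _ = (n : ℝ) ^ (2 / 3 : ℝ) + 1 := by
        rw [← rpow_one_sub' (by positivity) (by norm_num)]
        norm_num
    _ ≤ 2 * (n : ℝ) ^ (2 / 3 : ℝ) := by
        linarith [one_le_rpow hn1 (show (0 : ℝ) ≤ 2 / 3 by norm_num)]

theorem BSet_CSet_prime_division_general :
    ∀ᶠ n : ℕ in atTop, ∀ (S : Set ℕ) (d : ℕ),
      (((S ∩ primesLe' n).ncard : ℝ) ≤ kp n → (∀ p ∈ primesLe n, ¬p ∣ d) →
        (d : ℝ) ≤ (n : ℝ) ^ (1 / 3 : ℝ) →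
        ((BSet n S ∩ {m | d ∣ m}).ncard : ℝ) ≤ 2 * ((BSet n S).ncard : ℝ) / d ∧
        ((CSet n S ∩ {m | d ∣ m}).ncard : ℝ) ≤ 2 * ((CSet n S).ncard : ℝ) / d) ∧
      ((n : ℝ) ^ (1 / 3 : ℝ) < d →
        ((BSet n S ∩ {m | d ∣ m}).ncard : ℝ) ≤ 2 * (n : ℝ) ^ (2 / 3 : ℝ) ∧
        ((CSet n S ∩ {m | d ∣ m}).ncard : ℝ) ≤ 2 * (n : ℝ) ^ (2 / 3 : ℝ)) := by
  have hlim : Tendsto (fun n : ℕ => log (log n)) atTop atTop :=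
    tendsto_log_atTop.comp (tendsto_log_atTop.comp tendsto_natCast_atTop_atTop)
  filter_upwards [hlim.eventually_ge_atTop 100, eventually_ge_atTop 1] with n hn hn1 S d
  have hIoc := abs_card_Ioc_filter_dvd_sub_le n
  have hIoc' : (#{m ∈ Ioc 0 n | d ∣ m} : ℝ) ≤ n / d + 1 := by linarith [(abs_le.1 (hIoc d)).2]
  have hodd (D : ℕ) (hD : Odd D) := abs_card_odd_filter_dvd_sub_le n hD
  rw [BSet_eq, CSet_eq]
  constructor
  · intro hS hd hdn
    exact ⟨ncard_pattern_inter_dvd_le hn hS (fun D _ => hIoc D) hd hdn,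
      ncard_pattern_inter_dvd_le hn hS hodd hd hdn⟩
  · intro hd
    exact ⟨ncard_inter_dvd_le_of_lt hn1 hd hIoc' fun m hm => hm.1,
      ncard_inter_dvd_le_of_lt hn1 hd (card_odd_filter_dvd_le n d) fun m hm => hm.1⟩

/-- For all sufficiently large `n` and `S ⊆ 𝒫'_W` with `|S| < k`: for primes
`W < p' ≤ n^{1/3}`, `|B_S ∩ {m : p'|m}| ≤ 2|B_S|/p'` and `|C_S ∩ {m : p'|m}| ≤ 2|C_S|/p'`;
and for primes `p' > n^{1/3}`, both cardinalities are at most `2n^{2/3}`. -/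
theorem BSet_CSet_prime_division :
    ∃ N : ℕ, ∀ n : ℕ, N ≤ n → ∀ S : Set ℕ, S ⊆ primesLe' n → (S.ncard : ℝ) < kp n →
      (∀ p' : ℕ, p'.Prime → Wp n < (p' : ℝ) → (p' : ℝ) ≤ (n : ℝ) ^ ((1 : ℝ) / 3) →
        ((BSet n S ∩ {m : ℕ | p' ∣ m}).ncard : ℝ) ≤ 2 * ((BSet n S).ncard : ℝ) / (p' : ℝ) ∧
        ((CSet n S ∩ {m : ℕ | p' ∣ m}).ncard : ℝ) ≤ 2 * ((CSet n S).ncard : ℝ) / (p' : ℝ)) ∧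
      (∀ p' : ℕ, p'.Prime → (n : ℝ) ^ ((1 : ℝ) / 3) < (p' : ℝ) →
        ((BSet n S ∩ {m : ℕ | p' ∣ m}).ncard : ℝ) ≤ 2 * (n : ℝ) ^ ((2 : ℝ) / 3) ∧
        ((CSet n S ∩ {m : ℕ | p' ∣ m}).ncard : ℝ) ≤ 2 * (n : ℝ) ^ ((2 : ℝ) / 3)) := by
  obtain ⟨N, hN⟩ := eventually_atTop.1 BSet_CSet_prime_division_general
  refine ⟨N, fun n hn S hS hk => ⟨fun p' hp' hW hp'n => (hN n hn S p').1 ?_ (fun p hp hdvd => ?_)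
    hp'n, fun p' _ => (hN n hn S p').2⟩⟩
  · rw [Set.inter_eq_left.2 hS]
    exact hk.le
  · rw [(Nat.prime_dvd_prime_iff_eq hp.1 hp').1 hdvd] at hp
    exact hp.2.not_gt hW
end

section
/- There exists a constant δ > 0 such that for all sufficiently large n there exist functions φ₁ : [n] → 𝒨 and φ₂ : [n]_o → 𝒨 with the following properties: (1) φ₁(m₁) = ∗ for all m₁ ∈ B_{≥k} and φ₂(m₂) = ∗ for all m₂ ∈ C_{≥k}; (2) if S, T ⊆ 𝒫'_W satisfy S ∩ T ≠ ∅, then x ∈ B_S implies φ₁(x) ≠ T and y ∈ C_T implies φ₂(y) ≠ S; (3) for all S₁, S₂ ⊆ 𝒫'_W with |S₁|, |S₂| < k, the quantity β_{S₁,S₂} := #{m₁ ∈ B_{S₁} : φ₁(m₁) = S₂} equals #{m₂ ∈ C_{S₂} : φ₂(m₂) = S₁}; (4) for all such S₁, S₂ with S₁ ∩ S₂ = ∅, β_{S₁,S₂} lies between (1 − ε) and (1 + ε) times n·∏_{p ∈ S₁} p^{−1}·∏_{p ∈ S₂} p^{−1}·∏_{p ∈ 𝒫'_W \ (S₁ ∪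 S₂)} (1 − 2p^{−1}), where ε = exp(−δ·(log n · log log n)^{1/2}); (5) #{m₁ ∈ [n] : φ₁(m₁) = ∗} ≤ 2α^{1/2}·n; (6) #{m₂ ∈ [n]_o : φ₂(m₂) = ∗} ≤ 2α^{1/2}·n. -/
open Real Filter

/-- `B_{≥k} = [n] \ ⋃_{S ⊆ 𝒫'_W, |S| < k} B_S`. -/
noncomputable def BgeK (n : ℕ) : Set ℕ :=
  {m : ℕ | 1 ≤ m ∧ m ≤ n} \
    ⋃ S ∈ {S : Set ℕ | S ⊆ primesLe' n ∧ (S.ncard : ℝ) < kp n}, BSet n S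

/-- `C_{≥k} = [n]_o \ ⋃_{S ⊆ 𝒫'_W, |S| < k} C_S`. -/
noncomputable def CgeK (n : ℕ) : Set ℕ :=
  oddSet n \
    ⋃ S ∈ {S : Set ℕ | S ⊆ primesLe' n ∧ (S.ncard : ℝ) < kp n}, CSet n S

/-!
Independently for each odd prime `p ≤ W`, put `p` into `S` with probability `1/p`, into `T` with
probability `1/p`, and into neither otherwise. This gives each disjoint pair `(S, T)` a density
`c(S, T)`, symmetric in `S` and `T`, and its marginal `∑_T c(S, T) = ∏_{S} p⁻¹ ∏_{p ∉ S} (1 - p⁻¹)`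
is the expected density of the sieve classes `B_S` and `C_S`. By Brun's sieve, truncated just above
level `k`, for `|S| < k` both classes have at least `(1 - ε/2) n ∑_T c(S, T)` elements. So one can
choose disjoint subsets of `B_S` of sizes `⌊(1 - ε/2) n c(S, T)⌋`, one for each `T`, and give their
elements the label `T`; doing the same in the classes `C_T` proves (3) by the symmetry of `c`. The
integers left over are few because, by Rankin's trick, the pairs with `|S| ≥ k` or `|T| ≥ k` carry
little density, while rounding costs at most one element per pair and there are few pairs.
-/

section Bonferroni

open Finset

variable {ι α : Type*}

theorem sum_powerset_card_le_apply_card (U : Finset ι) (r : ℕ) (f : ℕ → ℤ) :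
    ∑ T ∈ U.powerset with #T ≤ r, f #T = ∑ j ∈ range (r + 1), (#U).choose j * f j := by
  have hmaps : ∀ T ∈ ({T ∈ U.powerset | #T ≤ r} : Finset (Finset ι)), #T ∈ range (r + 1) :=
    fun T hT ↦ mem_range_succ_iff.2 (mem_filter.1 hT).2
  rw [← sum_fiberwise_of_maps_to' hmaps f]
  refine sum_congr rfl fun j hj ↦ ?_
  have hfibre : {T ∈ {T ∈ U.powerset | #T ≤ r} | #T = j} = powersetCard j U := by
    ext T
    simp only [mem_filter, mem_powerset, mem_powersetCard]
    have := mem_range_succ_iff.1 hj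
    lia
  rw [hfibre, sum_const, card_powersetCard, nsmul_eq_mul]

theorem sum_powerset_card_le_neg_one_pow_le [DecidableEq ι] (U : Finset ι) {r : ℕ}
    (hr : Odd r) : ∑ T ∈ U.powerset with #T ≤ r, (-1 : ℤ) ^ #T ≤ if U = ∅ then 1 else 0 := by
  rcases U.eq_empty_or_nonempty with rfl | hU
  · simp [filter_singleton]
  obtain ⟨u, hu⟩ := Nat.exists_eq_add_one.2 hU.card_pos
  rw [sum_powerset_card_le_apply_card U r fun j ↦ (-1) ^ j, if_neg hU.ne_empty, hu]
  simp only [mul_comm _ ((-1 : ℤ) ^ _), Int.alternating_sum_range_choose_eq_choose,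
    hr.neg_one_pow]
  lia

theorem prod_one_sub_sub_sum_le {P : Finset ι} {x : ι → ℝ} (hx : ∀ i ∈ P, 0 ≤ x i) (r : ℕ) :
    ∏ i ∈ P, (1 - x i) - ∑ T ∈ P.powerset with r < #T, ∏ i ∈ T, x i
      ≤ ∑ T ∈ P.powerset with #T ≤ r, (-1) ^ #T * ∏ i ∈ T, x i := by
  classical
  have hexpand : ∏ i ∈ P, (1 - x i) = ∑ T ∈ P.powerset, (-1) ^ #T * ∏ i ∈ T, x i := by
    simp_rw [sub_eq_add_neg, prod_one_add, prod_neg]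
  have htail : ∑ T ∈ P.powerset with r < #T, (-1) ^ #T * ∏ i ∈ T, x i
      ≤ ∑ T ∈ P.powerset with r < #T, ∏ i ∈ T, x i := by
    refine sum_le_sum fun T hT ↦ ?_
    have hT0 : 0 ≤ ∏ i ∈ T, x i :=
      prod_nonneg fun i hi ↦ hx i (mem_powerset.1 (mem_filter.1 hT).1 hi)
    rcases neg_one_pow_eq_or ℝ #T with h | h <;> rw [h] <;> linarith
  rw [hexpand, ← sum_filter_add_sum_filter_not _ (fun T : Finset ι ↦ #T ≤ r)]
  simp only [not_le]
  linarith

variable [DecidableEq ι] {A : Finset α} {g : α → Finset ι} {P : Finset ι}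

theorem sum_neg_one_pow_mul_card_le_card_eq_empty (hg : ∀ m ∈ A, g m ⊆ P) {r : ℕ} (hr : Odd r) :
    ∑ T ∈ P.powerset with #T ≤ r, (-1 : ℤ) ^ #T * #{m ∈ A | T ⊆ g m} ≤ #{m ∈ A | g m = ∅} := by
  calc ∑ T ∈ P.powerset with #T ≤ r, (-1 : ℤ) ^ #T * #{m ∈ A | T ⊆ g m}
      = ∑ m ∈ A, ∑ T ∈ P.powerset with #T ≤ r, if T ⊆ g m then (-1 : ℤ) ^ #T else 0 := by
        simp only [card_filter, Nat.cast_sum, mul_sum]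
        rw [sum_comm]
        simp
    _ = ∑ m ∈ A, ∑ T ∈ (g m).powerset with #T ≤ r, (-1 : ℤ) ^ #T := by
        refine sum_congr rfl fun m hm ↦ ?_
        rw [← sum_filter]
        congr 1
        ext T
        simp only [mem_filter, mem_powerset]
        exact ⟨fun h ↦ ⟨h.2, h.1.2⟩, fun h ↦ ⟨⟨h.1.trans (hg m hm), h.2⟩, h.1⟩⟩
    _ ≤ ∑ m ∈ A, if g m = ∅ then 1 else 0 :=
        sum_le_sum fun m _ ↦ sum_powerset_card_le_neg_one_pow_le _ hr
    _ = #{m ∈ A | g m = ∅} := by rw [card_filter]; push_cast; rfl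

theorem sum_neg_one_pow_mul_card_le_card_eq (hg : ∀ m ∈ A, g m ⊆ P) (S : Finset ι) {r : ℕ}
    (hr : Odd r) :
    ∑ T ∈ (P \ S).powerset with #T ≤ r, (-1 : ℤ) ^ #T * #{m ∈ A | S ∪ T ⊆ g m}
      ≤ #{m ∈ A | g m = S} := by
  have hcard : #{m ∈ {m ∈ A | S ⊆ g m} | g m \ S = ∅} = #{m ∈ A | g m = S} := by
    rw [filter_filter]
    congr 1
    exact filter_congr fun m _ ↦ by rw [sdiff_eq_empty_iff_subset, and_comm, subset_antisymm_iff]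
  rw [← hcard]
  refine le_trans (sum_congr rfl fun T hT ↦ ?_).le (sum_neg_one_pow_mul_card_le_card_eq_empty
    (fun m hm ↦ sdiff_subset_sdiff (hg m (mem_filter.1 hm).1) le_rfl) hr)
  have hTS : Disjoint T S := (subset_sdiff.1 (mem_powerset.1 (mem_filter.1 hT).1)).2
  rw [filter_filter]
  simp only [union_subset_iff, subset_sdiff, hTS, and_true]

end Bonferroni

section Brun

open Finset

variable {ι α : Type*} [DecidableEq ι]

/-- Up to an absolute error of `1`, the properties `i ∈ P` hold on `A` as if they were independent
events of probabilities `x i`; here `g m` is the set of properties of `m`. -/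
structure IsEquidistributed (A : Finset α) (g : α → Finset ι) (P : Finset ι) (x : ι → ℝ) :
    Prop where
  subset : ∀ m ∈ A, g m ⊆ P
  abs_card_sub_le : ∀ T ⊆ P, |(#{m ∈ A | T ⊆ g m} : ℝ) - #A * ∏ i ∈ T, x i| ≤ 1

variable {A : Finset α} {g : α → Finset ι} {P S : Finset ι} {x : ι → ℝ}

theorem IsEquidistributed.brun_lower_bound (hA : IsEquidistributed A g P x)
    (hx : ∀ i ∈ P, 0 ≤ x i) (hS : S ⊆ P) {r : ℕ} (hr : Odd r) :
    #A * (∏ i ∈ S, x i) * (∏ i ∈ P \ S, (1 - x i)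
        - ∑ T ∈ (P \ S).powerset with r < #T, ∏ i ∈ T, x i)
      - #{T ∈ (P \ S).powerset | #T ≤ r} ≤ #{m ∈ A | g m = S} := by
  set F := {T ∈ (P \ S).powerset | #T ≤ r}
  have hterm : ∀ T ∈ F, #A * (∏ i ∈ S, x i) * ((-1) ^ #T * ∏ i ∈ T, x i) - 1
      ≤ (-1) ^ #T * #{m ∈ A | S ∪ T ⊆ g m} := by
    intro T hT
    obtain ⟨hTP, hTS⟩ := subset_sdiff.1 (mem_powerset.1 (mem_filter.1 hT).1)
    have := abs_le.1 (hA.abs_card_sub_le (S ∪ T) (union_subset hS hTP))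
    rw [prod_union hTS.symm] at this
    rcases neg_one_pow_eq_or ℝ #T with h | h <;> rw [h] <;> linarith
  calc _ ≤ #A * (∏ i ∈ S, x i) * ∑ T ∈ F, (-1) ^ #T * ∏ i ∈ T, x i - #F := by
        gcongr
        · exact mul_nonneg (Nat.cast_nonneg _) (prod_nonneg fun i hi ↦ hx i (hS hi))
        · exact prod_one_sub_sub_sum_le (fun i hi ↦ hx i (mem_sdiff.1 hi).1) r
    _ = ∑ T ∈ F, (#A * (∏ i ∈ S, x i) * ((-1) ^ #T * ∏ i ∈ T, x i) - 1) := by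
        rw [sum_sub_distrib, ← mul_sum, sum_const, nsmul_one]
    _ ≤ ∑ T ∈ F, (-1) ^ #T * (#{m ∈ A | S ∪ T ⊆ g m} : ℝ) := sum_le_sum hterm
    _ ≤ #{m ∈ A | g m = S} := by
        exact_mod_cast sum_neg_one_pow_mul_card_le_card_eq hA.subset S hr

end Brun

section Rankin

open Finset

variable {ι : Type*} {P : Finset ι} {F : Finset (Finset ι)}

theorem sum_prod_le_mul_exp_sum (hF : F ⊆ P.powerset) {x y : ι → ℝ} (hy : ∀ i ∈ P, 0 ≤ y i)
    {c : ℝ} (hc : 0 ≤ c) (h : ∀ T ∈ F, ∏ i ∈ T, x i ≤ c * ∏ i ∈ T, y i) :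
    ∑ T ∈ F, ∏ i ∈ T, x i ≤ c * exp (∑ i ∈ P, y i) := by
  classical
  calc ∑ T ∈ F, ∏ i ∈ T, x i ≤ ∑ T ∈ F, c * ∏ i ∈ T, y i := sum_le_sum h
    _ ≤ ∑ T ∈ P.powerset, c * ∏ i ∈ T, y i :=
        sum_le_sum_of_subset_of_nonneg hF fun T hT _ ↦
          mul_nonneg hc (prod_nonneg fun i hi ↦ hy i (mem_powerset.1 hT hi))
    _ = c * ∏ i ∈ P, (1 + y i) := by rw [← mul_sum, prod_one_add]
    _ ≤ c * exp (∑ i ∈ P, y i) := by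
        rw [← prod_attach, ← sum_attach]
        gcongr
        exact prod_one_add_le_exp_sum _ fun i ↦ hy i i.2

theorem sum_prod_le_exp_of_le_card (hF : F ⊆ P.powerset) {x : ι → ℝ} (hx : ∀ i ∈ P, 0 ≤ x i)
    {t k : ℝ} (ht : 0 ≤ t) (hk : ∀ T ∈ F, k ≤ #T) :
    ∑ T ∈ F, ∏ i ∈ T, x i ≤ exp (exp t * ∑ i ∈ P, x i - k * t) := by
  rw [sub_eq_neg_add, exp_add, mul_sum]
  refine sum_prod_le_mul_exp_sum hF (fun i hi ↦ mul_nonneg (exp_pos t).le (hx i hi))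
    (exp_pos _).le fun T hT ↦ ?_
  rw [prod_mul_distrib, prod_const, ← mul_assoc, ← exp_nat_mul, ← exp_add]
  refine le_mul_of_one_le_left
    (prod_nonneg fun i hi ↦ hx i (mem_powerset.1 (hF hT) hi)) (one_le_exp ?_)
  nlinarith [hk T hT]

theorem card_filter_card_le_le {w : ℝ} (hw : 1 ≤ w) (hP : #P ≤ w) (r : ℕ) :
    (#{T ∈ P.powerset | #T ≤ r} : ℝ) ≤ w ^ r * exp 1 := by
  have hw0 : 0 < w := by linarith
  calc (#{T ∈ P.powerset | #T ≤ r} : ℝ) = ∑ T ∈ P.powerset with #T ≤ r, ∏ _i ∈ T, 1 := by simp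
    _ ≤ w ^ r * exp (∑ _i ∈ P, w⁻¹) := by
        refine sum_prod_le_mul_exp_sum (filter_subset _ _) (fun _ _ ↦ by positivity)
          (by positivity) fun T hT ↦ ?_
        rw [prod_const_one, prod_const, inv_pow, ← div_eq_mul_inv, one_le_div (by positivity)]
        exact pow_le_pow_right₀ hw (mem_filter.1 hT).2
    _ ≤ w ^ r * exp 1 := by
        gcongr
        rw [sum_const, nsmul_eq_mul, ← div_eq_mul_inv]
        exact (div_le_one hw0).2 hP

end Rankin

section Labelling

open Finset

variable {α β γ : Type*} [DecidableEq β]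

theorem exists_partial_labelling (B : Finset α) (L : Finset β) (c : β → ℕ)
    (h : ∑ l ∈ L, c l ≤ #B) :
    ∃ φ : α → Option β, (∀ x l, φ x = some l → x ∈ B ∧ l ∈ L) ∧
      ∀ l ∈ L, #{x ∈ B | φ x = some l} = c l := by
  classical
  induction L using Finset.induction_on generalizing B with
  | empty => exact ⟨fun _ ↦ none, by simp, by simp⟩
  | insert l L hl ih =>
    rw [sum_insert hl] at h
    obtain ⟨U, hUB, hU⟩ := exists_subset_card_eq (show c l ≤ #B by lia)
    obtain ⟨φ, hφ, hc⟩ := ih (B \ U) (by rw [card_sdiff_of_subset hUB]; lia)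
    set ψ : α → Option β := fun x ↦ if x ∈ U then some l else φ x
    have hnew : ({x ∈ B | ψ x = some l} : Finset α) = U := by grind
    have hold : ∀ l' ≠ l, ({x ∈ B | ψ x = some l'} : Finset α) = {x ∈ B \ U | φ x = some l'} := by
      intro l' hne
      ext x
      by_cases hx : x ∈ U <;> simp [ψ, hx, hne.symm]
    refine ⟨ψ, by grind, fun l' hl' ↦ ?_⟩
    rcases eq_or_ne l' l with rfl | hne
    · rw [hnew, hU]
    · rw [hold l' hne, hc l' ((mem_insert.1 hl').resolve_left hne)]

variable [DecidableEq γ] {A : Finset α} {g : α → γ} {L : Finset β}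

theorem exists_labelling_of_fibres (c : γ → β → ℕ)
    (h : ∀ S, ∑ T ∈ L, c S T ≤ #{x ∈ A | g x = S}) :
    ∃ φ : α → Option β, (∀ x T, φ x = some T → x ∈ A ∧ T ∈ L) ∧
      ∀ S, ∀ T ∈ L, #{x ∈ A | g x = S ∧ φ x = some T} = c S T := by
  choose ψ hmem hcard using fun S ↦ exists_partial_labelling _ L (c S) (h S)
  refine ⟨fun x ↦ ψ (g x) x, fun x T hx ↦ ⟨?_, ?_⟩, fun S T hT ↦ ?_⟩
  · exact (mem_filter.1 (hmem _ x T hx).1).1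
  · exact (hmem _ x T hx).2
  · rw [← hcard S T hT, filter_filter]
    congr 1
    exact filter_congr fun x _ ↦ and_congr_right fun hx ↦ by subst hx; rfl

theorem card_eq_none_add_sum_card_eq_some {G : Finset γ} {φ : α → Option β}
    (hφ : ∀ x T, φ x = some T → g x ∈ G ∧ T ∈ L) :
    #{x ∈ A | φ x = none} + ∑ S ∈ G, ∑ T ∈ L, #{x ∈ A | g x = S ∧ φ x = some T} = #A := by
  have hfibre : ∀ x, ∑ S ∈ G, ∑ T ∈ L, (if g x = S ∧ φ x = some T then 1 else 0)
      = if φ x = none then 0 else 1 := by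
    intro x
    rcases hx : φ x with _ | T
    · simp
    · simp [ite_and, hφ x T hx]
  simp_rw [card_filter, sum_comm (t := A), hfibre, ← sum_add_distrib, card_eq_sum_ones]
  exact sum_congr rfl fun x _ ↦ by split_ifs <;> rfl

end Labelling

section PairDensity

open Finset

variable {ι : Type*}

theorem exp_neg_three_mul_sum_le_prod_one_sub {P : Finset ι} {x : ι → ℝ} (hx : ∀ i ∈ P, 0 ≤ x i)
    (hx' : ∀ i ∈ P, 3 * x i ≤ 2) : exp (-(3 * ∑ i ∈ P, x i)) ≤ ∏ i ∈ P, (1 - x i) := by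
  rw [mul_sum, ← sum_neg_distrib, exp_sum]
  refine prod_le_prod (fun i _ ↦ (exp_pos _).le) fun i hi ↦ ?_
  have hx0 := hx i hi
  have hx2 := hx' i hi
  have hpos : 0 < 1 - x i := by linarith
  have hinv : (1 - x i)⁻¹ ≤ 1 + 3 * x i := by
    rw [inv_le_iff_one_le_mul₀ hpos]
    nlinarith
  rw [← le_log_iff_exp_le hpos]
  linarith [one_sub_inv_le_log_of_pos hpos]

theorem mul_le_floor_mul {ε a : ℝ} (h : 1 ≤ ε / 2 * a) : (1 - ε) * a ≤ ⌊(1 - ε / 2) * a⌋₊ := by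
  linarith [Nat.lt_floor_add_one ((1 - ε / 2) * a)]

variable [DecidableEq ι]

/-- The probability that `S` and `T` are the outcomes of two random subsets of `P`, where each
`i ∈ P` independently lies in the first with probability `x i`, in the second with probability
`x i`, and never in both. -/
noncomputable def pairDensity (P : Finset ι) (x : ι → ℝ) (S T : Finset ι) : ℝ :=
  if Disjoint S T then (∏ i ∈ S, x i) * (∏ i ∈ T, x i) * ∏ i ∈ P \ (S ∪ T), (1 - 2 * x i) else 0

variable {P S T : Finset ι} {x : ι → ℝ} {F : Finset (Finset ι)}

theorem pairDensity_of_disjoint (h : Disjoint S T) : pairDensity P x S T =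
    (∏ i ∈ S, x i) * (∏ i ∈ T, x i) * ∏ i ∈ P \ (S ∪ T), (1 - 2 * x i) :=
  if_pos h

theorem pairDensity_of_not_disjoint (h : ¬ Disjoint S T) : pairDensity P x S T = 0 :=
  if_neg h

theorem pairDensity_comm : pairDensity P x S T = pairDensity P x T S := by
  simp only [pairDensity, disjoint_comm (a := S), union_comm S, mul_comm (∏ i ∈ S, x i)]

theorem sum_pairDensity :
    ∑ T ∈ P.powerset, pairDensity P x S T = (∏ i ∈ S, x i) * ∏ i ∈ P \ S, (1 - x i) := by
  have hsplit : ∏ i ∈ P \ S, (1 - x i) = ∏ i ∈ P \ S, (x i + (1 - 2 * x i)) :=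
    prod_congr rfl fun i _ ↦ by ring
  have hdisj : {T ∈ P.powerset | Disjoint S T} = (P \ S).powerset := by
    ext T
    simp only [mem_filter, mem_powerset, subset_sdiff, disjoint_comm]
  rw [hsplit, prod_add, mul_sum, ← hdisj]
  simp only [pairDensity]
  rw [← sum_filter]
  refine sum_congr rfl fun T _ ↦ ?_
  rw [sdiff_sdiff_left, sup_eq_union, mul_assoc]

theorem sum_sum_pairDensity :
    ∑ S ∈ P.powerset, ∑ T ∈ P.powerset, pairDensity P x S T = 1 := by
  simp_rw [sum_pairDensity, ← prod_add, add_sub_cancel, prod_const_one]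

section Nonneg

variable (hx : ∀ i ∈ P, 0 ≤ x i) (hx' : ∀ i ∈ P, 2 * x i ≤ 1)
include hx hx'

theorem pairDensity_nonneg (hS : S ⊆ P) (hT : T ⊆ P) : 0 ≤ pairDensity P x S T := by
  unfold pairDensity
  split_ifs
  · exact mul_nonneg (mul_nonneg (prod_nonneg fun i hi ↦ hx i (hS hi))
      (prod_nonneg fun i hi ↦ hx i (hT hi)))
      (prod_nonneg fun i hi ↦ sub_nonneg.2 (hx' i (mem_sdiff.1 hi).1))
  · exact le_rfl

theorem sum_pairDensity_le (hF : F ⊆ P.powerset) (hS : S ⊆ P) : ∑ T ∈ F, pairDensity P x S T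
      ≤ (∏ i ∈ S, x i) * ∏ i ∈ P \ S, (1 - x i) := by
  rw [← sum_pairDensity]
  exact sum_le_sum_of_subset_of_nonneg hF fun T hT _ ↦
    pairDensity_nonneg hx hx' hS (mem_powerset.1 hT)

theorem one_sub_le_sum_sum_pairDensity (hF : F ⊆ P.powerset) {τ : ℝ}
    (hτ : ∑ S ∈ P.powerset \ F, ∏ i ∈ S, x i ≤ τ) :
    1 - 2 * τ ≤ ∑ S ∈ F, ∑ T ∈ F, pairDensity P x S T := by
  have hfirst : ∑ S ∈ P.powerset \ F, ∑ T ∈ P.powerset, pairDensity P x S T ≤ τ := by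
    refine (sum_le_sum fun S hS ↦ ?_).trans hτ
    have hSP := mem_powerset.1 (mem_sdiff.1 hS).1
    rw [sum_pairDensity]
    refine mul_le_of_le_one_right (prod_nonneg fun i hi ↦ hx i (hSP hi))
      (prod_le_one (fun i hi ↦ ?_) fun i hi ↦ ?_)
    all_goals linarith [hx i (mem_sdiff.1 hi).1, hx' i (mem_sdiff.1 hi).1]
  have hsecond : ∑ S ∈ F, ∑ T ∈ P.powerset \ F, pairDensity P x S T ≤ τ := by
    rw [sum_comm]
    refine (sum_le_sum fun T hT ↦ ?_).trans hfirst
    simp only [pairDensity_comm (T := T)]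
    exact sum_le_sum_of_subset_of_nonneg hF fun S hS _ ↦ pairDensity_nonneg hx hx'
      (mem_powerset.1 (mem_sdiff.1 hT).1) (mem_powerset.1 hS)
  have htotal := sum_sum_pairDensity (P := P) (x := x)
  rw [← sum_sdiff hF] at htotal
  have hrow : ∑ S ∈ F, ∑ T ∈ P.powerset, pairDensity P x S T
      = ∑ S ∈ F, ∑ T ∈ P.powerset \ F, pairDensity P x S T
        + ∑ S ∈ F, ∑ T ∈ F, pairDensity P x S T := by
    rw [← sum_add_distrib]
    exact sum_congr rfl fun S _ ↦ (sum_sdiff hF).symm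
  linarith

variable {ε M : ℝ}

theorem sum_floor_mul_pairDensity_le (hF : F ⊆ P.powerset) (hS : S ⊆ P) (hM : 0 ≤ M) :
    ∑ T ∈ F, (⌊M * pairDensity P x S T⌋₊ : ℝ)
      ≤ M * ((∏ i ∈ S, x i) * ∏ i ∈ P \ S, (1 - x i)) := by
  calc ∑ T ∈ F, (⌊M * pairDensity P x S T⌋₊ : ℝ) ≤ ∑ T ∈ F, M * pairDensity P x S T :=
        sum_le_sum fun T hT ↦ Nat.floor_le
          (mul_nonneg hM (pairDensity_nonneg hx hx' hS (mem_powerset.1 (hF hT))))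
    _ ≤ M * ((∏ i ∈ S, x i) * ∏ i ∈ P \ S, (1 - x i)) := by
        rw [← mul_sum]
        exact mul_le_mul_of_nonneg_left (sum_pairDensity_le hx hx' hF hS) hM

theorem le_sum_sum_floor_mul_pairDensity (hF : F ⊆ P.powerset) (hM : 0 ≤ M) (hε : ε ≤ 1)
    (htail : ∑ S ∈ P.powerset \ F, ∏ i ∈ S, x i ≤ ε / 2)
    (hround : ∀ S ∈ F, ∀ T ∈ F, Disjoint S T → 1 ≤ ε / 2 * (M * pairDensity P x S T)) :
    (1 - 2 * ε) * M ≤ ∑ S ∈ F, ∑ T ∈ F, (⌊(1 - ε / 2) * (M * pairDensity P x S T)⌋₊ : ℝ) := by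
  have hfloor : ∀ S ∈ F, ∀ T ∈ F, (1 - ε) * (M * pairDensity P x S T)
      ≤ ⌊(1 - ε / 2) * (M * pairDensity P x S T)⌋₊ := by
    intro S hS T hT
    by_cases hST : Disjoint S T
    · exact mul_le_floor_mul (hround S hS T hT hST)
    · simp [pairDensity_of_not_disjoint hST]
  calc (1 - 2 * ε) * M ≤ (1 - ε) * (M * (1 - 2 * (ε / 2))) := by
        nlinarith [mul_nonneg hM (sq_nonneg ε)]
    _ ≤ (1 - ε) * (M * ∑ S ∈ F, ∑ T ∈ F, pairDensity P x S T) := by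
        have := sub_nonneg.2 hε
        gcongr
        exact one_sub_le_sum_sum_pairDensity hx hx' hF htail
    _ = ∑ S ∈ F, ∑ T ∈ F, (1 - ε) * (M * pairDensity P x S T) := by simp only [mul_sum]
    _ ≤ _ := sum_le_sum fun S hS ↦ sum_le_sum (hfloor S hS)

theorem exists_labelling_of_density {α : Type*} {A : Finset α} {g : α → Finset ι}
    (hF : F ⊆ P.powerset) (hε : ε ≤ 1)
    (hfibre : ∀ S ∈ F,
      (1 - ε / 2) * (#A * ((∏ i ∈ S, x i) * ∏ i ∈ P \ S, (1 - x i))) ≤ #{m ∈ A | g m = S})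
    (htail : ∑ S ∈ P.powerset \ F, ∏ i ∈ S, x i ≤ ε / 2)
    (hround : ∀ S ∈ F, ∀ T ∈ F, Disjoint S T → 1 ≤ ε / 2 * (#A * pairDensity P x S T)) :
    ∃ φ : α → Option (Finset ι),
      (∀ m T, φ m = some T → m ∈ A ∧ g m ∈ F ∧ T ∈ F ∧ Disjoint (g m) T) ∧
      (∀ S ∈ F, ∀ T ∈ F, #{m ∈ A | g m = S ∧ φ m = some T}
        = ⌊(1 - ε / 2) * (#A * pairDensity P x S T)⌋₊) ∧
      (#{m ∈ A | φ m = none} : ℝ) ≤ 2 * ε * #A := by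
  set c : Finset ι → Finset ι → ℕ := fun S T ↦
    if S ∈ F then ⌊(1 - ε / 2) * (#A * pairDensity P x S T)⌋₊ else 0 with hc
  obtain ⟨φ, hmem, hcard⟩ := exists_labelling_of_fibres (A := A) (g := g) (L := F) c fun S ↦ by
    by_cases hS : S ∈ F
    · simp only [hc, hS, if_true, ← Nat.cast_le (α := ℝ), Nat.cast_sum]
      refine le_trans ?_ (hfibre S hS)
      simp only [← mul_assoc (1 - ε / 2)]
      exact sum_floor_mul_pairDensity_le hx hx' hF (mem_powerset.1 (hF hS))
        (mul_nonneg (by linarith) (Nat.cast_nonneg _))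
    · simp [hc, hS]
  have hlabel : ∀ m T, φ m = some T → m ∈ A ∧ g m ∈ F ∧ T ∈ F ∧ Disjoint (g m) T := by
    intro m T hmT
    obtain ⟨hmA, hT⟩ := hmem m T hmT
    have hne : c (g m) T ≠ 0 := by
      rw [← hcard _ T hT]
      exact (card_pos.2 ⟨m, mem_filter.2 ⟨hmA, rfl, hmT⟩⟩).ne'
    refine ⟨hmA, by_contra fun hgm ↦ hne (if_neg hgm), hT, by_contra fun hdisj ↦ hne ?_⟩
    simp [hc, pairDensity_of_not_disjoint hdisj]
  have hcount : ∀ S ∈ F, ∀ T ∈ F, #{m ∈ A | g m = S ∧ φ m = some T}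
      = ⌊(1 - ε / 2) * (#A * pairDensity P x S T)⌋₊ :=
    fun S hS T hT ↦ (hcard S T hT).trans (if_pos hS)
  refine ⟨φ, hlabel, hcount, ?_⟩
  have htotal := card_eq_none_add_sum_card_eq_some (A := A) fun m T hmT ↦
    ⟨(hlabel m T hmT).2.1, (hlabel m T hmT).2.2.1⟩
  rw [sum_congr rfl fun S hS ↦ sum_congr rfl (hcount S hS), ← Nat.cast_inj (R := ℝ)] at htotal
  push_cast at htotal
  linarith [le_sum_sum_floor_mul_pairDensity hx hx' hF (Nat.cast_nonneg #A) hε htail hround]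

end Nonneg

end PairDensity

section SieveParameters

open Finset

theorem exp_sub_two_le (a : ℝ) : exp (a - 2) ≤ exp a / 4 := by
  have htwo : (2 : ℝ) ≤ exp 1 := by linarith [add_one_le_exp (1 : ℝ)]
  rw [exp_sub, show (2 : ℝ) = 1 + 1 by norm_num, exp_add]
  gcongr
  nlinarith

theorem exists_odd_natCast_between {k : ℝ} (hk : 0 ≤ k) :
    ∃ r : ℕ, Odd r ∧ k ≤ r ∧ (r : ℝ) ≤ k + 3 := by
  refine ⟨2 * ⌈k / 2⌉₊ + 1, odd_two_mul_add_one _, ?_, ?_⟩ <;> push_cast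
  · linarith [Nat.le_ceil (k / 2)]
  · linarith [Nat.ceil_lt_add_one (show 0 ≤ k / 2 by linarith)]

variable {ι : Type*}

/-- The size conditions under which the sieve is applied to `N` integers and divisors `i ∈ P` of
densities `x i`. Here `k` and `y` stand for the threshold `k(n)` and for `log log n`, in terms of
which `log n = 1024 k² y` and `log W(n) = k y / 32`. The last condition serves Rankin's trick,
applied with the weight `exp (3 y / 8)` per element. -/
structure SieveParameters (P : Finset ι) (x : ι → ℝ) (N k y : ℝ) : Prop where
  one_le : 1 ≤ k
  le_y : 48 ≤ y
  eq_exp : N = exp (1024 * (k ^ 2 * y))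
  exp_neg_le : ∀ i ∈ P, exp (-(k * y / 32)) ≤ x i
  three_mul_le : ∀ i ∈ P, 3 * x i ≤ 1
  card_le : #P ≤ exp (k * y / 32)
  exp_mul_sum_le : exp (3 * y / 8) * ∑ i ∈ P, x i ≤ k

namespace SieveParameters

variable {P S T : Finset ι} {F : Finset (Finset ι)} {x : ι → ℝ} {N k y : ℝ}
  (h : SieveParameters P x N k y)
include h

theorem nonneg : ∀ i ∈ P, 0 ≤ x i :=
  fun i hi ↦ (exp_pos _).le.trans (h.exp_neg_le i hi)

theorem two_mul_le : ∀ i ∈ P, 2 * x i ≤ 1 :=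
  fun i hi ↦ by linarith [h.nonneg i hi, h.three_mul_le i hi]

theorem le_mul : 48 * k ≤ k * y := by
  nlinarith [h.one_le, h.le_y]

theorem mul_le_sq_mul : k * y ≤ k ^ 2 * y := by
  nlinarith [h.one_le, h.le_y, h.le_mul]

theorem exp_neg_le_one : exp (-(k * y / 4)) ≤ 1 :=
  exp_le_one_iff.2 (by linarith [h.le_mul, h.one_le])

theorem sum_le (hS : S ⊆ P) : ∑ i ∈ S, x i ≤ k := by
  have hsum : 0 ≤ ∑ i ∈ P, x i := sum_nonneg h.nonneg
  calc ∑ i ∈ S, x i ≤ ∑ i ∈ P, x i := sum_le_sum_of_subset_of_nonneg hS fun i hi _ ↦ h.nonneg i hi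
    _ ≤ exp (3 * y / 8) * ∑ i ∈ P, x i :=
        le_mul_of_one_le_left hsum (one_le_exp (by linarith [h.le_y]))
    _ ≤ k := h.exp_mul_sum_le

theorem exp_neg_le_prod (hS : S ⊆ P) (hk : #S < k) :
    exp (-(k ^ 2 * y / 32)) ≤ ∏ i ∈ S, x i := by
  calc exp (-(k ^ 2 * y / 32)) ≤ exp (-(k * y / 32)) ^ #S := by
        rw [← exp_nat_mul, exp_le_exp]
        nlinarith [h.one_le, h.le_mul]
    _ = ∏ _i ∈ S, exp (-(k * y / 32)) := by rw [prod_const]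
    _ ≤ ∏ i ∈ S, x i := prod_le_prod (fun _ _ ↦ (exp_pos _).le) fun i hi ↦ h.exp_neg_le i (hS hi)

theorem exp_neg_le_prod_one_sub (hS : S ⊆ P) : exp (-(3 * k)) ≤ ∏ i ∈ S, (1 - x i) := by
  refine le_trans ?_ (exp_neg_three_mul_sum_le_prod_one_sub (fun i hi ↦ h.nonneg i (hS hi))
    fun i hi ↦ by linarith [h.three_mul_le i (hS hi)])
  gcongr
  exact h.sum_le hS

theorem exp_neg_le_prod_one_sub_two_mul (hS : S ⊆ P) :
    exp (-(6 * k)) ≤ ∏ i ∈ S, (1 - 2 * x i) := by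
  refine le_trans ?_ (exp_neg_three_mul_sum_le_prod_one_sub
    (fun i hi ↦ mul_nonneg zero_le_two (h.nonneg i (hS hi)))
    fun i hi ↦ by linarith [h.three_mul_le i (hS hi)])
  rw [← mul_sum, exp_le_exp]
  linarith [h.sum_le hS]

theorem sum_prod_le_exp (hF : F ⊆ P.powerset) (hk : ∀ T ∈ F, k ≤ #T) :
    ∑ T ∈ F, ∏ i ∈ T, x i ≤ exp (k - 3 * (k * y) / 8) := by
  refine (sum_prod_le_exp_of_le_card hF h.nonneg (by linarith [h.le_y] : 0 ≤ 3 * y / 8) hk).trans ?_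
  rw [exp_le_exp]
  linarith [h.exp_mul_sum_le]

theorem sum_prod_le_half (hF : F ⊆ P.powerset) (hk : ∀ T ∈ F, k ≤ #T) :
    ∑ T ∈ F, ∏ i ∈ T, x i ≤ exp (-(k * y / 4)) / 2 := by
  calc ∑ T ∈ F, ∏ i ∈ T, x i ≤ exp (k - 3 * (k * y) / 8) := h.sum_prod_le_exp hF hk
    _ ≤ exp (-(k * y / 4) - 2) := exp_le_exp.2 (by linarith [h.le_mul, h.one_le])
    _ ≤ exp (-(k * y / 4)) / 2 := by
        linarith [exp_sub_two_le (-(k * y / 4)), exp_pos (-(k * y / 4))]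

theorem sum_prod_le_mul_prod_one_sub (hF : F ⊆ P.powerset) (hk : ∀ T ∈ F, k ≤ #T) (hS : S ⊆ P) :
    ∑ T ∈ F, ∏ i ∈ T, x i ≤ exp (-(k * y / 4)) / 4 * ∏ i ∈ S, (1 - x i) := by
  calc ∑ T ∈ F, ∏ i ∈ T, x i ≤ exp (k - 3 * (k * y) / 8) := h.sum_prod_le_exp hF hk
    _ ≤ exp (-(k * y / 4) - 2) * exp (-(3 * k)) := by
        rw [← exp_add, exp_le_exp]
        linarith [h.le_mul, h.one_le]
    _ ≤ exp (-(k * y / 4)) / 4 * ∏ i ∈ S, (1 - x i) := by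
        gcongr
        · exact exp_sub_two_le _
        · exact h.exp_neg_le_prod_one_sub hS

theorem card_filter_card_le_le_mul (hS : S ⊆ P) (hSk : #S < k) (hT : T ⊆ P) {r : ℕ}
    (hr : (r : ℝ) ≤ k + 3) : (#{U ∈ T.powerset | #U ≤ r} : ℝ)
      ≤ exp (-(k * y / 4)) / 4 * (N * (∏ i ∈ S, x i) * ∏ i ∈ T, (1 - x i)) := by
  have hcard : (#T : ℝ) ≤ exp (k * y / 32) := (Nat.cast_le.2 (card_le_card hT)).trans h.card_le
  have hky := h.le_mul
  have hk := h.one_le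
  calc (#{U ∈ T.powerset | #U ≤ r} : ℝ) ≤ exp (k * y / 32) ^ r * exp 1 :=
        card_filter_card_le_le (one_le_exp (by linarith)) hcard r
    _ ≤ exp (-(k * y / 4) - 2)
          * (exp (1024 * (k ^ 2 * y)) * exp (-(k ^ 2 * y / 32)) * exp (-(3 * k))) := by
        simp only [← exp_nat_mul, ← exp_add]
        rw [exp_le_exp]
        nlinarith [h.mul_le_sq_mul, mul_le_mul_of_nonneg_right hr (by linarith : 0 ≤ k * y / 32)]
    _ ≤ exp (-(k * y / 4)) / 4 * (N * (∏ i ∈ S, x i) * ∏ i ∈ T, (1 - x i)) := by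
        rw [h.eq_exp]
        gcongr
        · exact exp_sub_two_le _
        · exact mul_nonneg (exp_pos _).le (prod_nonneg fun i hi ↦ h.nonneg i (hS hi))
        · exact h.exp_neg_le_prod hS hSk
        · exact h.exp_neg_le_prod_one_sub hT

variable [DecidableEq ι]

theorem one_le_mul_pairDensity (hS : S ⊆ P) (hT : T ⊆ P) (hSk : #S < k) (hTk : #T < k)
    (hST : Disjoint S T) : 1 ≤ exp (-(k * y / 4)) / 2 * (N * pairDensity P x S T) := by
  calc (1 : ℝ) ≤ exp (-(k * y / 4)) / 2 * exp (k * y / 4 + 1) := by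
        rw [div_mul_eq_mul_div, ← exp_add, neg_add_cancel_left]
        linarith [add_one_le_exp (1 : ℝ)]
    _ ≤ exp (-(k * y / 4)) / 2 * (exp (1024 * (k ^ 2 * y))
          * (exp (-(k ^ 2 * y / 32)) * exp (-(k ^ 2 * y / 32)) * exp (-(6 * k)))) := by
        gcongr
        simp only [← exp_add]
        rw [exp_le_exp]
        linarith [h.le_mul, h.mul_le_sq_mul, h.one_le]
    _ ≤ exp (-(k * y / 4)) / 2 * (N * pairDensity P x S T) := by
        rw [h.eq_exp, pairDensity_of_disjoint hST]
        gcongr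
        · exact mul_nonneg (prod_nonneg fun i hi ↦ h.nonneg i (hS hi))
            (prod_nonneg fun i hi ↦ h.nonneg i (hT hi))
        · exact prod_nonneg fun i hi ↦ h.nonneg i (hS hi)
        · exact h.exp_neg_le_prod hS hSk
        · exact h.exp_neg_le_prod hT hTk
        · exact h.exp_neg_le_prod_one_sub_two_mul sdiff_subset

variable {α : Type*} {A : Finset α} {g : α → Finset ι}

theorem sieve_lower_bound (hA : IsEquidistributed A g P x) (hN : #A = N) (hS : S ⊆ P)
    (hSk : #S < k) : (1 - exp (-(k * y / 4)) / 2)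
      * (#A * ((∏ i ∈ S, x i) * ∏ i ∈ P \ S, (1 - x i))) ≤ #{m ∈ A | g m = S} := by
  obtain ⟨r, hodd, hkr, hrk⟩ := exists_odd_natCast_between (zero_le_one.trans h.one_le)
  have htail := h.sum_prod_le_mul_prod_one_sub
    (F := {T ∈ (P \ S).powerset | r < #T})
    ((filter_subset _ _).trans (powerset_mono.2 sdiff_subset))
    (fun T hT ↦ hkr.trans (Nat.cast_le.2 (mem_filter.1 hT).2.le)) (sdiff_subset (t := S))
  have hcount := h.card_filter_card_le_le_mul hS hSk (sdiff_subset (t := S)) hrk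
  have hbrun := hA.brun_lower_bound h.nonneg hS hodd
  rw [hN] at hbrun ⊢
  have hmain : 0 ≤ N * ∏ i ∈ S, x i :=
    mul_nonneg (h.eq_exp ▸ (exp_pos _).le) (prod_nonneg fun i hi ↦ h.nonneg i (hS hi))
  linarith [mul_le_mul_of_nonneg_left htail hmain]

theorem exists_labelling (hA : IsEquidistributed A g P x) (hN : #A = N) :
    ∃ φ : α → Option (Finset ι),
      (∀ m T, φ m = some T → m ∈ A ∧ (g m ⊆ P ∧ #(g m) < k) ∧ (T ⊆ P ∧ #T < k)
        ∧ Disjoint (g m) T) ∧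
      (∀ S ⊆ P, #S < k → ∀ T ⊆ P, #T < k → #{m ∈ A | g m = S ∧ φ m = some T}
        = ⌊(1 - exp (-(k * y / 4)) / 2) * (#A * pairDensity P x S T)⌋₊) ∧
      (#{m ∈ A | φ m = none} : ℝ) ≤ 2 * exp (-(k * y / 4)) * #A := by
  obtain ⟨F, hF, hmem⟩ : ∃ F ⊆ P.powerset, ∀ S, S ∈ F ↔ S ⊆ P ∧ #S < k :=
    ⟨{S ∈ P.powerset | #S < k}, filter_subset _ _, by simp⟩
  have hfibre : ∀ S ∈ F, (1 - exp (-(k * y / 4)) / 2)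
      * (#A * ((∏ i ∈ S, x i) * ∏ i ∈ P \ S, (1 - x i))) ≤ #{m ∈ A | g m = S} := fun S hS ↦
    h.sieve_lower_bound hA hN ((hmem S).1 hS).1 ((hmem S).1 hS).2
  have htail : ∑ S ∈ P.powerset \ F, ∏ i ∈ S, x i ≤ exp (-(k * y / 4)) / 2 := by
    refine h.sum_prod_le_half sdiff_subset fun T hT ↦ ?_
    obtain ⟨hTP, hTF⟩ := mem_sdiff.1 hT
    exact not_lt.1 fun hlt ↦ hTF ((hmem T).2 ⟨mem_powerset.1 hTP, hlt⟩)
  have hround : ∀ S ∈ F, ∀ T ∈ F, Disjoint S T →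
      1 ≤ exp (-(k * y / 4)) / 2 * (#A * pairDensity P x S T) := fun S hS T hT ↦
    hN ▸ h.one_le_mul_pairDensity ((hmem S).1 hS).1 ((hmem T).1 hT).1 ((hmem S).1 hS).2
      ((hmem T).1 hT).2
  obtain ⟨φ, hlabel, hcount, hnone⟩ := exists_labelling_of_density h.nonneg h.two_mul_le
    hF h.exp_neg_le_one hfibre htail hround
  simp only [hmem] at hlabel hcount
  exact ⟨φ, hlabel, fun S hS hSk T hT hTk ↦ hcount S ⟨hS, hSk⟩ T ⟨hT, hTk⟩, hnone⟩

end SieveParameters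

end SieveParameters

section Progression

open Finset

/-- The progression `1, a + 1, …, (n - 1) a + 1`: it is `[n]` for `a = 1` and `[n]_o` for
`a = 2`. -/
def progression (a n : ℕ) : Finset ℕ :=
  (range n).image fun j ↦ a * j + 1

/-- The set of the elements of `P` dividing `m`; it labels the sieve class of `m`. -/
def divisorsIn (P : Finset ℕ) (m : ℕ) : Finset ℕ :=
  {p ∈ P | p ∣ m}

theorem coe_progression_one (n : ℕ) : (progression 1 n : Set ℕ) = {m | 1 ≤ m ∧ m ≤ n} := by
  ext m
  simp only [progression, coe_image, coe_range, Set.mem_image, Set.mem_Iio, Set.mem_ofPred_eq]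
  exact ⟨by rintro ⟨j, hj, rfl⟩; lia, fun h ↦ ⟨m - 1, by lia, by lia⟩⟩

theorem coe_progression_two (n : ℕ) : (progression 2 n : Set ℕ) = oddSet n := by
  ext m
  simp only [progression, coe_image, coe_range, Set.mem_image, Set.mem_Iio, oddSet,
    Set.mem_ofPred_eq]
  constructor
  · rintro ⟨j, hj, rfl⟩
    exact ⟨⟨j, rfl⟩, by lia⟩
  · rintro ⟨⟨j, rfl⟩, hj⟩
    exact ⟨j, by lia, rfl⟩

theorem mul_add_one_injective {a : ℕ} (ha : a ≠ 0) : Function.Injective fun j ↦ a * j + 1 :=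
  (add_left_injective 1).comp (mul_right_injective₀ ha)

theorem card_progression {a : ℕ} (ha : a ≠ 0) (n : ℕ) : #(progression a n) = n := by
  rw [progression, card_image_of_injective _ (mul_add_one_injective ha), card_range]

theorem abs_card_filter_modEq_sub_le {d : ℕ} (hd : 0 < d) (n v : ℕ) :
    |(#{j ∈ range n | j ≡ v [MOD d]} : ℝ) - n / d| ≤ 1 := by
  have hfloor : ((n / d : ℕ) : ℝ) ≤ n / d := Nat.cast_div_le
  have hlt : (n : ℝ) / d < (n / d : ℕ) + 1 := by
    rw [div_lt_iff₀ (by positivity)]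
    exact_mod_cast Nat.lt_mul_of_div_lt (Nat.lt_succ_self _) hd
  rw [← Nat.count_eq_card_filter_range, Nat.count_modEq_card _ hd, abs_le]
  push_cast
  split_ifs <;> constructor <;> linarith

theorem exists_forall_dvd_mul_add_one_iff_modEq {a d : ℕ} (hd : 0 < d) (had : a.Coprime d) :
    ∃ v, ∀ j, d ∣ a * j + 1 ↔ j ≡ v [MOD d] := by
  have : NeZero d := ⟨hd.ne'⟩
  have hinv : (a : ZMod d) * (a : ZMod d)⁻¹ = 1 := ZMod.coe_mul_inv_eq_one a had
  refine ⟨(-(a : ZMod d)⁻¹).val, fun j ↦ ?_⟩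
  rw [← ZMod.natCast_eq_natCast_iff, ZMod.natCast_zmod_val, ← ZMod.natCast_eq_zero_iff]
  push_cast
  constructor
  · intro h
    linear_combination (a : ZMod d)⁻¹ * h - (j : ZMod d) * hinv
  · rintro h
    rw [h]
    linear_combination -hinv

theorem isEquidistributed_progression {a : ℕ} (ha : a ≠ 0) (n : ℕ) {P : Finset ℕ}
    (hP : ∀ p ∈ P, p.Prime) (hPa : ∀ p ∈ P, p.Coprime a) :
    IsEquidistributed (progression a n) (divisorsIn P) P fun p ↦ (p : ℝ)⁻¹ where
  subset _ _ := filter_subset _ _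
  abs_card_sub_le T hT := by
    have hdvd : ∀ m, T ⊆ divisorsIn P m ↔ ∏ p ∈ T, p ∣ m := fun m ↦
      ⟨fun h ↦ prod_primes_dvd m (fun p hp ↦ (hP p (hT hp)).prime) fun p hp ↦
        (mem_filter.1 (h hp)).2,
        fun h p hp ↦ mem_filter.2 ⟨hT hp, (dvd_prod_of_mem _ hp).trans h⟩⟩
    have hd : 0 < ∏ p ∈ T, p := prod_pos fun p hp ↦ (hP p (hT hp)).pos
    obtain ⟨v, hv⟩ := exists_forall_dvd_mul_add_one_iff_modEq hd
      (Nat.Coprime.prod_left fun p hp ↦ hPa p (hT hp)).symm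
    have hcard : #{m ∈ progression a n | T ⊆ divisorsIn P m}
        = #{j ∈ range n | j ≡ v [MOD ∏ p ∈ T, p]} := by
      rw [progression, filter_image, card_image_of_injective _ (mul_add_one_injective ha)]
      simp only [hdvd, hv]
    rw [hcard, card_progression ha, prod_inv_distrib, ← div_eq_mul_inv, ← Nat.cast_prod]
    exact abs_card_filter_modEq_sub_le hd n v

end Progression

section PrimeReciprocals

open Finset

theorem mul_card_primes_dyadic_le (J : ℕ) :
    J * #{p ∈ Ico (2 ^ J) (2 ^ (J + 1)) | p.Prime} ≤ 2 ^ (J + 2) := by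
  set T := {p ∈ Ico (2 ^ J) (2 ^ (J + 1)) | p.Prime}
  have hT : ∀ p ∈ T, 2 ^ J ≤ p ∧ p ≤ 2 ^ (J + 1) ∧ p.Prime := fun p hp ↦ by
    obtain ⟨hpI, hp⟩ := mem_filter.1 hp
    exact ⟨(mem_Ico.1 hpI).1, (mem_Ico.1 hpI).2.le, hp⟩
  rw [← Nat.pow_le_pow_iff_right one_lt_two]
  calc 2 ^ (J * #T) = (2 ^ J) ^ #T := pow_mul _ _ _
    _ ≤ ∏ p ∈ T, p := pow_card_le_prod _ _ _ fun p hp ↦ (hT p hp).1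
    _ ≤ primorial (2 ^ (J + 1)) := by
        refine prod_le_prod_of_subset_of_one_le' (fun p hp ↦ ?_) fun p hp _ ↦
          (mem_filter.1 hp).2.one_le
        exact mem_filter.2 ⟨mem_range_succ_iff.2 (hT p hp).2.1, (hT p hp).2.2⟩
    _ ≤ 4 ^ 2 ^ (J + 1) := primorial_le_four_pow _
    _ = 2 ^ 2 ^ (J + 2) := by rw [show 4 = 2 ^ 2 by rfl, ← pow_mul]; ring_nf

theorem sum_inv_primes_dyadic_le {J : ℕ} (hJ : 0 < J) :
    ∑ p ∈ (Ico (2 ^ J) (2 ^ (J + 1)) : Finset ℕ) with p.Prime, (p : ℝ)⁻¹ ≤ 4 / J := by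
  set T := {p ∈ Ico (2 ^ J) (2 ^ (J + 1)) | p.Prime}
  have hcard : (J : ℝ) * #T ≤ 2 ^ (J + 2) := by exact_mod_cast mul_card_primes_dyadic_le J
  calc ∑ p ∈ T, (p : ℝ)⁻¹ ≤ ∑ _p ∈ T, ((2 : ℝ) ^ J)⁻¹ := by
        refine sum_le_sum fun p hp ↦ ?_
        gcongr
        exact_mod_cast (mem_Ico.1 (mem_filter.1 hp).1).1
    _ ≤ 4 / J := by
        rw [sum_const, nsmul_eq_mul, ← div_eq_mul_inv, div_le_div_iff₀ (by positivity)
          (by positivity), mul_comm]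
        exact hcard.trans_eq (by ring)

theorem sum_inv_primes_lt_two_pow_le (J : ℕ) :
    ∑ p ∈ range (2 ^ (J + 1)) with p.Prime, (p : ℝ)⁻¹ ≤ 4 * (1 + log J) := by
  have hharmonic : ∑ p ∈ range (2 ^ (J + 1)) with p.Prime, (p : ℝ)⁻¹ ≤ 4 * harmonic J := by
    induction J with
    | zero =>
      have hempty : (range 2).filter Nat.Prime = ∅ := by decide
      simp [hempty]
    | succ J ih =>
      rw [harmonic_succ, Rat.cast_add, mul_add, sum_filter, ← sum_range_add_sum_Ico _
        (Nat.pow_le_pow_right two_pos (Nat.le_succ (J + 1))), ← sum_filter, ← sum_filter]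
      refine add_le_add ih ((sum_inv_primes_dyadic_le J.succ_pos).trans_eq ?_)
      push_cast
      rw [div_eq_mul_inv]
  linarith [harmonic_le_one_add_log J]

theorem sum_inv_le_of_le_exp {P : Finset ℕ} {u : ℝ} (hP : ∀ p ∈ P, p.Prime) (hu : 1 ≤ u)
    (hPu : ∀ p ∈ P, (p : ℝ) ≤ exp u) : ∑ p ∈ P, (p : ℝ)⁻¹ ≤ 4 * (1 + log (3 * u)) := by
  set J := ⌈2 * u⌉₊
  have hJ : 2 * u ≤ J := Nat.le_ceil _
  have hJ' : (J : ℝ) < 2 * u + 1 := Nat.ceil_lt_add_one (by linarith)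
  have hexp : exp u ≤ (2 ^ J : ℕ) := by
    rw [← le_log_iff_exp_le (by positivity), Nat.cast_pow, log_pow]
    push_cast
    nlinarith [log_two_gt_d9]
  calc ∑ p ∈ P, (p : ℝ)⁻¹ ≤ ∑ p ∈ range (2 ^ (J + 1)) with p.Prime, (p : ℝ)⁻¹ := by
        refine sum_le_sum_of_subset_of_nonneg (fun p hp ↦ ?_) fun p _ _ ↦ by positivity
        have hpJ : p ≤ 2 ^ J := Nat.cast_le.1 ((hPu p hp).trans hexp)
        exact mem_filter.2 ⟨mem_range.2 (hpJ.trans_lt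
          (Nat.pow_lt_pow_right one_lt_two J.lt_succ_self)), hP p hp⟩
    _ ≤ 4 * (1 + log J) := sum_inv_primes_lt_two_pow_le J
    _ ≤ 4 * (1 + log (3 * u)) := by
        gcongr
        linarith

end PrimeReciprocals

section Parameters

open Finset

theorem kp_nonneg (n : ℕ) : 0 ≤ kp n := by
  unfold kp
  positivity

theorem kp_mul_log_log {n : ℕ} (hy : 0 < log (log n)) :
    kp n * log (log n) = 2 ^ (-5 : ℤ) * √(log n * log (log n)) := by
  have hsq : log n * log (log n) = log n / log (log n) * log (log n) ^ 2 := by field_simp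
  rw [kp, mul_assoc, hsq, sqrt_mul' _ (sq_nonneg _), sqrt_sq hy.le]

theorem log_eq_kp_sq_mul {n : ℕ} (hL : 0 ≤ log n) (hy : 0 < log (log n)) :
    log n = 1024 * (kp n ^ 2 * log (log n)) := by
  rw [kp, mul_pow, sq_sqrt (div_nonneg hL hy.le)]
  field_simp
  norm_num

theorem Wp_eq_exp {n : ℕ} (hy : 0 < log (log n)) : Wp n = exp (kp n * log (log n) / 32) := by
  rw [Wp, kp_mul_log_log hy]
  congr 1
  ring

theorem exp_neg_le_ap_rpow_half {n : ℕ} (hL : 0 < log n) (hy : 1 ≤ log (log n))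
    (hk : 1 ≤ kp n) : exp (-(kp n * log (log n) / 4)) ≤ ap n ^ ((1 : ℝ) / 2) := by
  have hlog : 2 * log (kp n) ≤ log (log n) := by
    rw [← Nat.cast_ofNat, ← log_pow]
    refine log_le_log (by positivity) ?_
    rw [log_eq_kp_sq_mul hL.le (by linarith)]
    nlinarith [sq_nonneg (kp n)]
  rw [ap, ← exp_mul, exp_le_exp]
  nlinarith

theorem exp_mul_le_kp {n : ℕ} (hL : 0 < log n) (hy : 1 ≤ log (log n))
    (hexp : 65536 * log (log n) ^ 3 ≤ exp (log (log n) / 4)) :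
    exp (3 * log (log n) / 8) * (4 * (1 + log (log n))) ≤ kp n := by
  set y := log (log n)
  refine le_of_sq_le_sq (le_of_mul_le_mul_left ?_ (by positivity : 0 < 1024 * y)) (kp_nonneg n)
  calc 1024 * y * (exp (3 * y / 8) * (4 * (1 + y))) ^ 2
      = exp (3 * y / 4) * (16384 * (y * (1 + y) ^ 2)) := by
        rw [mul_pow, ← exp_nat_mul]
        ring_nf
    _ ≤ exp (3 * y / 4) * (16384 * (y * (2 * y) ^ 2)) := by
        gcongr
        linarith
    _ ≤ exp (3 * y / 4) * exp (y / 4) := by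
        gcongr
        linarith
    _ = log n := by rw [← exp_add, show 3 * y / 4 + y / 4 = y by ring, exp_log hL]
    _ = 1024 * y * kp n ^ 2 := by
        rw [log_eq_kp_sq_mul hL.le (by linarith)]
        ring

/-- The set `𝒫'_W` as a finset. -/
noncomputable def oddPrimes (n : ℕ) : Finset ℕ :=
  {p ∈ Icc 1 ⌊Wp n⌋₊ | p.Prime ∧ p ≠ 2}

theorem mem_oddPrimes {n p : ℕ} : p ∈ oddPrimes n ↔ p ∈ primesLe' n := by
  rw [oddPrimes, mem_filter, mem_Icc, Nat.le_floor_iff (show 0 ≤ Wp n from (exp_pos _).le)]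
  exact ⟨fun h ↦ ⟨⟨h.2.1, h.1.2⟩, h.2.2⟩, fun h ↦ ⟨⟨h.1.1.one_le, h.1.2⟩, h.1.1, h.2⟩⟩

theorem coe_oddPrimes (n : ℕ) : (oddPrimes n : Set ℕ) = primesLe' n :=
  Set.ext fun _ ↦ mem_oddPrimes

theorem prime_of_mem_oddPrimes {n p : ℕ} (hp : p ∈ oddPrimes n) : p.Prime :=
  (mem_oddPrimes.1 hp).1.1

theorem coprime_two_of_mem_oddPrimes {n p : ℕ} (hp : p ∈ oddPrimes n) : p.Coprime 2 :=
  (Nat.coprime_primes (prime_of_mem_oddPrimes hp) Nat.prime_two).2 (mem_oddPrimes.1 hp).2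

theorem three_le_of_mem_oddPrimes {n p : ℕ} (hp : p ∈ oddPrimes n) : 3 ≤ p :=
  (prime_of_mem_oddPrimes hp).two_le.lt_of_ne' (mem_oddPrimes.1 hp).2

theorem card_oddPrimes_le (n : ℕ) : #(oddPrimes n) ≤ Wp n := by
  calc (#(oddPrimes n) : ℝ) ≤ ⌊Wp n⌋₊ := by
        exact_mod_cast (card_filter_le _ _).trans_eq (Nat.card_Icc 1 _)
    _ ≤ Wp n := Nat.floor_le (exp_pos _).le

theorem exists_finset_coe_eq {n : ℕ} {S : Set ℕ} (hS : S ⊆ primesLe' n) :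
    ∃ S' ⊆ oddPrimes n, (S' : Set ℕ) = S := by
  rw [← coe_oddPrimes] at hS
  obtain ⟨S', rfl⟩ := ((oddPrimes n).finite_toSet.subset hS).exists_finset_coe
  exact ⟨S', coe_subset.1 hS, rfl⟩

theorem sum_inv_oddPrimes_le {n : ℕ} (hL : 0 < log n) (hy : 0 < log (log n)) (hk : 1 ≤ kp n)
    (hky : 32 ≤ kp n * log (log n)) :
    ∑ p ∈ oddPrimes n, (p : ℝ)⁻¹ ≤ 4 * (1 + log (log n)) := by
  have hu : 1 ≤ kp n * log (log n) / 32 := by linarith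
  calc ∑ p ∈ oddPrimes n, (p : ℝ)⁻¹
      ≤ 4 * (1 + log (3 * (kp n * log (log n) / 32))) :=
        sum_inv_le_of_le_exp (fun _ ↦ prime_of_mem_oddPrimes) hu fun p hp ↦
          (mem_oddPrimes.1 hp).1.2.trans_eq (Wp_eq_exp hy)
    _ ≤ 4 * (1 + log (log n)) := by
        gcongr
        have hL' := log_eq_kp_sq_mul hL.le hy
        nlinarith

theorem sieveParameters_oddPrimes {n : ℕ} (hL : 0 < log n) (hy : 48 ≤ log (log n))
    (hexp : 65536 * log (log n) ^ 3 ≤ exp (log (log n) / 4)) :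
    SieveParameters (oddPrimes n) (fun p ↦ (p : ℝ)⁻¹) n (kp n) (log (log n)) := by
  have hy0 : 0 < log (log n) := by linarith
  have hn : (0 : ℝ) < n := Nat.cast_pos.2 (Nat.pos_of_ne_zero (by rintro rfl; simp at hL))
  have hmul := exp_mul_le_kp hL (by linarith) hexp
  have hk : 1 ≤ kp n := by
    nlinarith [one_le_exp (show 0 ≤ 3 * log (log n) / 8 by linarith)]
  exact {
    one_le := hk
    le_y := hy
    eq_exp := by rw [← log_eq_kp_sq_mul hL.le hy0, exp_log hn]
    exp_neg_le p hp := by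
      rw [exp_neg, ← Wp_eq_exp hy0]
      exact inv_anti₀ (Nat.cast_pos.2 (prime_of_mem_oddPrimes hp).pos) (mem_oddPrimes.1 hp).1.2
    three_mul_le p hp := by
      rw [← div_eq_mul_inv, div_le_one (Nat.cast_pos.2 (prime_of_mem_oddPrimes hp).pos)]
      exact_mod_cast three_le_of_mem_oddPrimes hp
    card_le := (card_oddPrimes_le n).trans_eq (Wp_eq_exp hy0)
    exp_mul_sum_le := by
      refine le_trans ?_ hmul
      gcongr
      exact sum_inv_oddPrimes_le hL hy0 hk (by nlinarith) }

theorem eventually_sieveParameters_oddPrimes : ∀ᶠ n : ℕ in atTop,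
    SieveParameters (oddPrimes n) (fun p ↦ (p : ℝ)⁻¹) n (kp n) (log (log n)) := by
  have hlog : Tendsto (fun n : ℕ ↦ log n) atTop atTop :=
    tendsto_log_atTop.comp tendsto_natCast_atTop_atTop
  have hloglog : Tendsto (fun n : ℕ ↦ log (log n)) atTop atTop := tendsto_log_atTop.comp hlog
  have hexp : ∀ᶠ y : ℝ in atTop, 65536 * y ^ 3 ≤ exp (y / 4) := by
    have hlittle := (isLittleO_pow_exp_pos_mul_atTop 3 (show (0 : ℝ) < 1 / 4 by norm_num)).def
      (show (0 : ℝ) < 1 / 65536 by norm_num)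
    filter_upwards [hlittle, eventually_ge_atTop 0] with y hy hy0
    rw [norm_of_nonneg (by positivity), norm_of_nonneg (by positivity)] at hy
    rw [show y / 4 = 1 / 4 * y by ring]
    linarith
  filter_upwards [hlog.eventually_gt_atTop 0, hloglog.eventually_ge_atTop 48,
    hloglog.eventually hexp] with n
  exact sieveParameters_oddPrimes

end Parameters

section Assignment

open Finset

theorem mem_BSet {n m : ℕ} {S : Set ℕ} :
    m ∈ BSet n S ↔ m ∈ progression 1 n ∧ ∀ p ∈ primesLe' n, (p ∣ m ↔ p ∈ S) := by
  rw [← mem_coe, coe_progression_one]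
  exact and_assoc.symm

theorem mem_CSet {n m : ℕ} {S : Set ℕ} :
    m ∈ CSet n S ↔ m ∈ progression 2 n ∧ ∀ p ∈ primesLe' n, (p ∣ m ↔ p ∈ S) := by
  rw [← mem_coe, coe_progression_two]
  rfl

theorem divisorsIn_eq_iff {P S : Finset ℕ} {m : ℕ} (hS : S ⊆ P) :
    divisorsIn P m = S ↔ ∀ p ∈ P, (p ∣ m ↔ p ∈ S) := by
  conv_lhs => rw [divisorsIn, ← inter_eq_right.2 hS, ← filter_mem_eq_inter, filter_inj']

/-- The error `ε` of the paper, with `δ = 2^{-7}`. -/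
noncomputable def relError (n : ℕ) : ℝ :=
  exp (-(2 : ℝ) ^ (-7 : ℤ) * √(log n * log (log n)))

/-- The main term for `β_{S,T}` when `S` and `T` are disjoint. -/
noncomputable def expectedCount (n : ℕ) (S T : Set ℕ) : ℝ :=
  n * (∏ᶠ p ∈ S, (p : ℝ)⁻¹) * (∏ᶠ p ∈ T, (p : ℝ)⁻¹) *
    ∏ᶠ p ∈ primesLe' n \ (S ∪ T), (1 - 2 * (p : ℝ)⁻¹)

open Classical in
/-- The number of integers of class `S` receiving the label `T`, that is `β_{S,T}`. It is taken
slightly below `expectedCount n S T`, so that each class has enough elements for all its labels. -/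
noncomputable def labelCount (n : ℕ) (S T : Set ℕ) : ℕ :=
  if Disjoint S T then ⌊(1 - relError n / 2) * expectedCount n S T⌋₊ else 0

theorem labelCount_comm (n : ℕ) (S T : Set ℕ) : labelCount n S T = labelCount n T S := by
  have hcomm : expectedCount n S T = expectedCount n T S := by
    rw [expectedCount, mul_right_comm (n : ℝ), Set.union_comm, expectedCount]
  classical rw [labelCount, labelCount, hcomm, if_congr disjoint_comm rfl rfl]

theorem relError_eq {n : ℕ} (hy : 0 < log (log n)) :
    relError n = exp (-(kp n * log (log n) / 4)) := by
  rw [relError, kp_mul_log_log hy]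
  congr 1
  ring

theorem expectedCount_coe {n : ℕ} {S T : Finset ℕ} (hST : Disjoint S T) :
    expectedCount n S T = n * pairDensity (oddPrimes n) (fun p ↦ (p : ℝ)⁻¹) S T := by
  rw [expectedCount, ← coe_oddPrimes, ← coe_union, ← coe_sdiff, finprod_mem_coe_finset,
    finprod_mem_coe_finset, finprod_mem_coe_finset, pairDensity_of_disjoint hST]
  ring

theorem labelCount_coe {n : ℕ} (S T : Finset ℕ) : labelCount n S T =
    ⌊(1 - relError n / 2) * (n * pairDensity (oddPrimes n) (fun p ↦ (p : ℝ)⁻¹) S T)⌋₊ := by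
  by_cases hST : Disjoint S T
  · rw [labelCount, if_pos (disjoint_coe.2 hST), expectedCount_coe hST]
  · rw [labelCount, if_neg (disjoint_coe.not.2 hST), pairDensity_of_not_disjoint hST, mul_zero,
      mul_zero, Nat.floor_zero]

/-- The properties required of each of the functions `φ₁` and `φ₂`, where `A` is the interval to
be labelled and `C S` is its class of label `S`. Property (3) is obtained by prescribing for both
functions the same symmetric `labelCount`. -/
structure IsAssignment (n : ℕ) (A : Set ℕ) (C : Set ℕ → Set ℕ) (φ : ℕ → Option (Set ℕ)) :
    Prop where
  label : ∀ m S, φ m = some S → S ⊆ primesLe' n ∧ (S.ncard : ℝ) < kp n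
  eq_none : ∀ m ∈ A \ ⋃ S ∈ {S : Set ℕ | S ⊆ primesLe' n ∧ (S.ncard : ℝ) < kp n}, C S, φ m = none
  ne_some : ∀ S T, (S ∩ T).Nonempty → ∀ m ∈ C S, φ m ≠ some T
  ncard_eq : ∀ S T, S ⊆ primesLe' n → T ⊆ primesLe' n → (S.ncard : ℝ) < kp n →
    (T.ncard : ℝ) < kp n → {m ∈ C S | φ m = some T}.ncard = labelCount n S T
  ncard_none_le : ({m ∈ A | φ m = none}.ncard : ℝ) ≤ 2 * ap n ^ ((1 : ℝ) / 2) * n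

variable {n : ℕ}
  (h : SieveParameters (oddPrimes n) (fun p ↦ (p : ℝ)⁻¹) n (kp n) (log (log n)))
include h

theorem two_mul_exp_neg_mul_le :
    2 * exp (-(kp n * log (log n) / 4)) * n ≤ 2 * ap n ^ ((1 : ℝ) / 2) * n := by
  have hL : 0 < log n := by
    rw [h.eq_exp, log_exp]
    linarith [h.one_le, h.le_mul, h.mul_le_sq_mul]
  gcongr
  exact exp_neg_le_ap_rpow_half hL (by linarith [h.le_y]) h.one_le

theorem labelCount_bounds {S T : Set ℕ} (hS : S ⊆ primesLe' n) (hT : T ⊆ primesLe' n)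
    (hSk : S.ncard < kp n) (hTk : T.ncard < kp n) (hST : Disjoint S T) :
    (1 - relError n) * expectedCount n S T ≤ labelCount n S T ∧
      labelCount n S T ≤ (1 + relError n) * expectedCount n S T := by
  obtain ⟨S, hSP, rfl⟩ := exists_finset_coe_eq hS
  obtain ⟨T, hTP, rfl⟩ := exists_finset_coe_eq hT
  rw [Set.ncard_coe_finset] at hSk hTk
  rw [disjoint_coe] at hST
  have hε : relError n = exp (-(kp n * log (log n) / 4)) := relError_eq (by linarith [h.le_y])
  have hε0 : 0 < relError n := exp_pos _
  have hε1 : relError n ≤ 1 := hε ▸ h.exp_neg_le_one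
  have hone : 1 ≤ relError n / 2 * expectedCount n S T := by
    rw [hε, expectedCount_coe hST]
    exact h.one_le_mul_pairDensity hSP hTP hSk hTk hST
  have hcount : 0 ≤ expectedCount n S T := by nlinarith
  rw [labelCount, if_pos (disjoint_coe.2 hST)]
  refine ⟨mul_le_floor_mul hone, (Nat.floor_le (mul_nonneg (by linarith) hcount)).trans ?_⟩
  gcongr
  linarith

theorem exists_isAssignment {a : ℕ} (ha : a ≠ 0) (hcop : ∀ p ∈ oddPrimes n, p.Coprime a)
    {C : Set ℕ → Set ℕ}
    (hC : ∀ {m S}, m ∈ C S ↔ m ∈ progression a n ∧ ∀ p ∈ primesLe' n, (p ∣ m ↔ p ∈ S)) :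
    ∃ φ, IsAssignment n (progression a n) C φ := by
  obtain ⟨φ, hφ, hcount, hnone⟩ := h.exists_labelling
    (isEquidistributed_progression ha n (fun _ ↦ prime_of_mem_oddPrimes) hcop)
    (by rw [card_progression ha])
  rw [card_progression ha] at hcount hnone
  have hclass : ∀ {m} {S : Finset ℕ}, S ⊆ oddPrimes n →
      (m ∈ C S ↔ m ∈ progression a n ∧ divisorsIn (oddPrimes n) m = S) := fun hS ↦ by
    simp only [hC, divisorsIn_eq_iff hS, mem_oddPrimes, mem_coe]
  have hsubset : ∀ {S : Finset ℕ}, S ⊆ oddPrimes n → (S : Set ℕ) ⊆ primesLe' n := fun hS ↦ by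
    rwa [← coe_oddPrimes, coe_subset]
  refine ⟨fun m ↦ (φ m).map (↑), ?_, ?_, ?_, ?_, ?_⟩
  · intro m S hmS
    obtain ⟨T, hmT, rfl⟩ := Option.map_eq_some_iff.1 hmS
    obtain ⟨-, -, ⟨hTP, hTk⟩, -⟩ := hφ m T hmT
    exact ⟨hsubset hTP, by rwa [Set.ncard_coe_finset]⟩
  · rintro m ⟨-, hm⟩
    refine Option.map_eq_none_iff.2 (Option.eq_none_iff_forall_ne_some.2 fun T hmT ↦ hm ?_)
    obtain ⟨hmA, ⟨hSP, hSk⟩, -⟩ := hφ m T hmT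
    exact Set.mem_biUnion ⟨hsubset hSP, by rwa [Set.ncard_coe_finset]⟩ ((hclass hSP).2 ⟨hmA, rfl⟩)
  · rintro S T ⟨p, hpS, hpT⟩ m hm hmT
    obtain ⟨T, hφT, rfl⟩ := Option.map_eq_some_iff.1 hmT
    obtain ⟨-, -, ⟨hTP, -⟩, hdisj⟩ := hφ m T hφT
    have hpm : p ∣ m := ((hC.1 hm).2 p (mem_oddPrimes.1 (hTP hpT))).2 hpS
    exact disjoint_left.1 hdisj (mem_filter.2 ⟨hTP hpT, hpm⟩) hpT
  · intro S T hS hT hSk hTk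
    obtain ⟨S, hSP, rfl⟩ := exists_finset_coe_eq hS
    obtain ⟨T, hTP, rfl⟩ := exists_finset_coe_eq hT
    rw [Set.ncard_coe_finset] at hSk hTk
    rw [labelCount_coe, relError_eq (by linarith [h.le_y]), ← hcount S hSP hSk T hTP hTk,
      ← Set.ncard_coe_finset]
    congr 1
    ext m
    simp [hclass hSP, Option.map_eq_some_iff, and_assoc]
  · refine le_trans (le_of_eq ?_) (hnone.trans (two_mul_exp_neg_mul_le h))
    rw [← Set.ncard_coe_finset]
    simp

end Assignment

/-- The assignment ("template") lemma.  Labels are modelled by `Option (Set ℕ)`: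
`some S` is the label `S` (a subset of `𝒫'_W` of size `< k`) and `none` is the label `∗`. -/
theorem exists_assignment_functions :
    ∃ δ : ℝ, 0 < δ ∧ ∃ N : ℕ, ∀ n : ℕ, N ≤ n →
      ∃ φ₁ φ₂ : ℕ → Option (Set ℕ),
        -- labels are subsets of 𝒫'_W of size < k (or ∗)
        (∀ m : ℕ, ∀ S : Set ℕ, φ₁ m = some S → S ⊆ primesLe' n ∧ (S.ncard : ℝ) < kp n) ∧
        (∀ m : ℕ, ∀ S : Set ℕ, φ₂ m = some S → S ⊆ primesLe' n ∧ (S.ncard : ℝ) < kp n) ∧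
        -- (1)
        (∀ m₁ ∈ BgeK n, φ₁ m₁ = none) ∧
        (∀ m₂ ∈ CgeK n, φ₂ m₂ = none) ∧
        -- (2)
        (∀ S T : Set ℕ, S ⊆ primesLe' n → T ⊆ primesLe' n → (S ∩ T).Nonempty →
          (∀ x ∈ BSet n S, φ₁ x ≠ some T) ∧ (∀ y ∈ CSet n T, φ₂ y ≠ some S)) ∧
        -- (3)
        (∀ S₁ S₂ : Set ℕ, S₁ ⊆ primesLe' n → S₂ ⊆ primesLe' n →
            (S₁.ncard : ℝ) < kp n → (S₂.ncard : ℝ) < kp n →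
          {m₁ ∈ BSet n S₁ | φ₁ m₁ = some S₂}.ncard
            = {m₂ ∈ CSet n S₂ | φ₂ m₂ = some S₁}.ncard) ∧
        -- (4)
        (∀ S₁ S₂ : Set ℕ, S₁ ⊆ primesLe' n → S₂ ⊆ primesLe' n →
            (S₁.ncard : ℝ) < kp n → (S₂.ncard : ℝ) < kp n → S₁ ∩ S₂ = ∅ →
          (1 - Real.exp (-δ * Real.sqrt (Real.log n * Real.log (Real.log n)))) *
              ((n : ℝ) * (∏ᶠ p ∈ S₁, ((p : ℝ))⁻¹) * (∏ᶠ p ∈ S₂, ((p : ℝ))⁻¹) *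
                ∏ᶠ p ∈ primesLe' n \ (S₁ ∪ S₂), (1 - 2 * ((p : ℝ))⁻¹))
            ≤ ({m₁ ∈ BSet n S₁ | φ₁ m₁ = some S₂}.ncard : ℝ) ∧
          ({m₁ ∈ BSet n S₁ | φ₁ m₁ = some S₂}.ncard : ℝ) ≤
            (1 + Real.exp (-δ * Real.sqrt (Real.log n * Real.log (Real.log n)))) *
              ((n : ℝ) * (∏ᶠ p ∈ S₁, ((p : ℝ))⁻¹) * (∏ᶠ p ∈ S₂, ((p : ℝ))⁻¹) *
                ∏ᶠ p ∈ primesLe' n \ (S₁ ∪ S₂), (1 - 2 * ((p : ℝ))⁻¹))) ∧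
        -- (5)
        (({m : ℕ | 1 ≤ m ∧ m ≤ n ∧ φ₁ m = none}.ncard : ℝ) ≤ 2 * ap n ^ ((1 : ℝ) / 2) * n) ∧
        -- (6)
        (({m ∈ oddSet n | φ₂ m = none}.ncard : ℝ) ≤ 2 * ap n ^ ((1 : ℝ) / 2) * n) := by
  obtain ⟨N, hN⟩ := eventually_atTop.1 eventually_sieveParameters_oddPrimes
  refine ⟨2 ^ (-7 : ℤ), by positivity, N, fun n hn ↦ ?_⟩
  have h := hN n hn
  obtain ⟨φ₁, h₁⟩ := exists_isAssignment h one_ne_zero (fun _ _ ↦ Nat.coprime_one_right _) mem_BSet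
  obtain ⟨φ₂, h₂⟩ := exists_isAssignment h two_ne_zero (fun _ ↦ coprime_two_of_mem_oddPrimes)
    mem_CSet
  rw [coe_progression_one] at h₁
  rw [coe_progression_two] at h₂
  refine ⟨φ₁, φ₂, h₁.label, h₂.label, h₁.eq_none, h₂.eq_none, ?_, ?_, ?_, ?_, h₂.ncard_none_le⟩
  · exact fun S T _ _ hST ↦
      ⟨h₁.ne_some S T hST, h₂.ne_some T S (Set.inter_comm S T ▸ hST)⟩
  · intro S T hS hT hSk hTk
    rw [h₁.ncard_eq S T hS hT hSk hTk, h₂.ncard_eq T S hT hS hTk hSk, labelCount_comm]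
  · intro S T hS hT hSk hTk hST
    rw [h₁.ncard_eq S T hS hT hSk hTk]
    exact labelCount_bounds h hS hT hSk hTk (Set.disjoint_iff_inter_eq_empty.2 hST)
  · simpa only [Set.mem_ofPred_eq, and_assoc] using h₁.ncard_none_le
end
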